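/- arXiv:2101.08098 — 7 statements merged into one kernel-verified Lean document; each statement's English description precedes it below -/
import Mathlib

section
/- Let (A,I) be a Jacobson pair and let F1(x), F2(x) ∈ A[x] be monic polynomials. Then F1(x) and F2(x) are left coprime in A[x] if and only if their reductions F̄1(x), F̄2(x) ∈ (A/I)[x] are left coprime in (A/I)[x]. -/
open Polynomial

universe u

/-- A morphism of pairs `(A,I) → (B,J)`: a ring homomorphism `φ : A → B` with
`φ ⁻¹(J) = I`. -/
def IsPairHom {A B : Type*} [Ring A] [Ring B] (I : TwoSidedIdeal A)
    (J : TwoSidedIdeal B) (φ : A →+* B) : Prop :=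
  ∀ a : A, φ a ∈ J ↔ a ∈ I

/-- The commutator filtration of the pair `(A,I)`, indexed from `0`:
`commFilt I 0 = I^(1) = I` and `commFilt I (n+1) = I^(n+2)` is the two-sided ideal
generated by the commutators `[A, I^(n+1)]`. -/
def commFilt {A : Type*} [Ring A] (I : TwoSidedIdeal A) : ℕ → TwoSidedIdeal A
  | 0 => I
  | n + 1 => TwoSidedIdeal.span {x | ∃ a b : A, b ∈ commFilt I n ∧ x = a * b - b * a}

/-- A pair `(A,I)` is perfect if the intersection of its commutator filtration is `{0}`. -/
def IsPerfectPair {A : Type*} [Ring A] (I : TwoSidedIdeal A) : Prop :=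
  ∀ x : A, (∀ n, x ∈ commFilt I n) → x = 0

/-- A pair `(A,I)` is a Jacobson pair if `I` is contained in the Jacobson radical of `A`;
for a two-sided ideal this is equivalent to `1 + a` being a unit for every `a ∈ I`. -/
def IsJacobsonPair {A : Type*} [Ring A] (I : TwoSidedIdeal A) : Prop :=
  ∀ a ∈ I, IsUnit (1 + a)

/-- `f₁, f₂ ∈ A[x]` are left coprime: `A[x]f₁ + A[x]f₂ = A[x]`, equivalently there are
`g₁, g₂` with `g₁f₁ + g₂f₂ = 1`. -/
def LeftCoprime {A : Type*} [Semiring A] (f1 f2 : A[X]) : Prop :=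
  ∃ g1 g2 : A[X], g1 * f1 + g2 * f2 = 1

/-- A pair `(A,I)` is left Henselian: it is a Jacobson pair, and every factorization of
the reduction of a monic polynomial into left coprime monic factors lifts uniquely. -/
def IsLeftHenselianPair {A : Type*} [Ring A] (I : TwoSidedIdeal A) : Prop :=
  IsJacobsonPair I ∧
  ∀ F : A[X], F.Monic →
    ∀ f1 f2 : (I.ringCon.Quotient)[X], f1.Monic → f2.Monic → LeftCoprime f1 f2 →
      F.map (I.ringCon.mk') = f1 * f2 →
      ∃! p : A[X] × A[X], p.1.Monic ∧ p.2.Monic ∧ F = p.1 * p.2 ∧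
        p.1.map I.ringCon.mk' = f1 ∧ p.2.map I.ringCon.mk' = f2

/-- A ring homomorphism is local if it sends every nonunit to a nonunit. -/
def RingHomIsLocal {A B : Type*} [Ring A] [Ring B] (φ : A →+* B) : Prop :=
  ∀ a : A, ¬ IsUnit a → ¬ IsUnit (φ a)

/-- `φ : (A,I) → (H,J)` is a left Henselization of the perfect pair `(A,I)`:
`(H,J)` is a perfect left Henselian pair and every morphism of pairs from `(A,I)` to a
perfect left Henselian pair factors uniquely through `φ`. -/
def IsLeftHenselization {A H : Type u} [Ring A] [Ring H] (I : TwoSidedIdeal A)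
    (J : TwoSidedIdeal H) (φ : A →+* H) : Prop :=
  IsPairHom I J φ ∧ IsPerfectPair J ∧ IsLeftHenselianPair J ∧
  ∀ (B : Type u) (_ : Ring B) (K : TwoSidedIdeal B) (ψ0 : A →+* B),
    IsPairHom I K ψ0 → IsPerfectPair K → IsLeftHenselianPair K →
    ∃! ψ : H →+* B, IsPairHom J K ψ ∧ ψ0 = ψ.comp φ


/-- Reduction: polynomials in `I[X]` are, mod the left ideal `N`, congruent to ones of
low degree. -/
def LowRep {A : Type*} [Ring A] (I : TwoSidedIdeal A) (N : Submodule A[X] A[X]) (k : ℕ) : Prop :=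
  ∀ p : A[X], (∀ m, p.coeff m ∈ I) →
    ∃ r : A[X], (∀ m, r.coeff m ∈ I) ∧ (∀ m, k ≤ m → r.coeff m = 0) ∧ p - r ∈ N

theorem coeff_mul_mem_left {A : Type*} [Ring A] (I : TwoSidedIdeal A) (p s : A[X])
    (hs : ∀ m, s.coeff m ∈ I) (m : ℕ) : (p * s).coeff m ∈ I := by
  rw [coeff_mul]
  exact sum_mem fun x _ => I.mul_mem_left _ _ (hs _)

theorem coeff_mul_mem_right {A : Type*} [Ring A] (I : TwoSidedIdeal A) (s p : A[X])
    (hs : ∀ m, s.coeff m ∈ I) (m : ℕ) : (s * p).coeff m ∈ I := by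
  rw [coeff_mul]
  exact sum_mem fun x _ => I.mul_mem_right _ _ (hs _)

theorem lowRep_natDegree {A : Type*} [Ring A] (I : TwoSidedIdeal A) (N : Submodule A[X] A[X])
    (F : A[X]) (hF : F.Monic) (hN : F ∈ N) : LowRep I N F.natDegree := by
  have key : ∀ d : ℕ, ∀ p : A[X], (∀ m, p.coeff m ∈ I) →
      (∀ m, F.natDegree + d ≤ m → p.coeff m = 0) →
      ∃ r : A[X], (∀ m, r.coeff m ∈ I) ∧ (∀ m, F.natDegree ≤ m → r.coeff m = 0) ∧ p - r ∈ N := by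
    intro d
    induction d with
    | zero => intro p hp h; exact ⟨p, hp, by simpa using h, by simp⟩
    | succ d ih =>
      intro p hp h
      set q : A[X] := C (p.coeff (F.natDegree + d)) * X ^ d with hq
      have hqI : ∀ m, q.coeff m ∈ I := by
        intro m
        rw [hq, coeff_C_mul_X_pow]
        split_ifs
        · exact hp _
        · exact I.zero_mem
      have hc : ∀ m, (q * F).coeff (m + d) = p.coeff (F.natDegree + d) * F.coeff m := by
        intro m
        rw [hq, mul_assoc, coeff_C_mul, X_pow_mul, coeff_mul_X_pow]
      obtain ⟨r, hr1, hr2, hr3⟩ := ih (p - q * F)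
        (fun m => by
          rw [coeff_sub]
          exact I.sub_mem (hp m) (coeff_mul_mem_right I q F hqI m))
        (fun m hm => by
          obtain ⟨e, rfl⟩ : ∃ e, m = (F.natDegree + e) + d := ⟨m - F.natDegree - d, by omega⟩
          rw [coeff_sub, hc]
          rcases Nat.eq_zero_or_pos e with rfl | he
          · simp [hF.coeff_natDegree]
          · rw [h _ (by omega), coeff_eq_zero_of_natDegree_lt (p := F) (by omega)]
            simp)
      refine ⟨r, hr1, hr2, ?_⟩
      have : p - r = (p - q * F - r) + q • F := by simp only [smul_eq_mul]; abel
      rw [this]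
      exact N.add_mem hr3 (N.smul_mem q hN)
  intro p hp
  exact key (p.natDegree + 1) p hp
    (fun m hm => coeff_eq_zero_of_natDegree_lt (by omega))

theorem lowRep_step {A : Type*} [Ring A] (I : TwoSidedIdeal A) (hJac : IsJacobsonPair I)
    (N : Submodule A[X] A[X]) (s : A[X]) (hs : ∀ m, s.coeff m ∈ I) (hsN : 1 - s ∈ N)
    (k : ℕ) (h : LowRep I N (k + 1)) : LowRep I N k := by
  have cut : ∀ r : A[X], (∀ m, r.coeff m ∈ I) → (∀ m, k + 1 ≤ m → r.coeff m = 0) →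
      ∃ r' : A[X], (∀ m, r'.coeff m ∈ I) ∧ (∀ m, k ≤ m → r'.coeff m = 0) ∧
        r = C (r.coeff k) * X ^ k + r' := by
    intro r hr hr0
    refine ⟨r - C (r.coeff k) * X ^ k, ?_, ?_, by abel⟩
    · intro m
      rw [coeff_sub, coeff_C_mul_X_pow]
      split_ifs
      · exact I.sub_mem (hr _) (hr _)
      · simpa using hr m
    · intro m hm
      rw [coeff_sub, coeff_C_mul_X_pow]
      split_ifs with e
      · simp [e]
      · rw [hr0 m (by omega)]; simp
  obtain ⟨t, ht1, ht2, ht3⟩ : ∃ t : A[X], (∀ m, t.coeff m ∈ I) ∧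
      (∀ m, k ≤ m → t.coeff m = 0) ∧ X ^ k - t ∈ N := by
    obtain ⟨r, hr1, hr2, hr3⟩ := h (X ^ k * s) (coeff_mul_mem_left I _ s hs)
    obtain ⟨r', h1, h2, h3⟩ := cut r hr1 hr2
    obtain ⟨u, hu⟩ := hJac (-(r.coeff k)) (I.neg_mem (hr1 k))
    refine ⟨C (↑u⁻¹ : A) * r', coeff_mul_mem_left I _ _ h1, ?_, ?_⟩
    · intro m hm
      rw [coeff_C_mul, h2 m hm, mul_zero]
    · have e1 : (X ^ k : A[X]) • (1 - s) + (X ^ k * s - r) = C (u : A) * X ^ k - r' := by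
        conv_lhs => rw [h3]
        rw [hu, smul_eq_mul, C_add, C_neg, C_1]
        noncomm_ring
      have e2 : (X ^ k : A[X]) - C (↑u⁻¹ : A) * r'
          = C (↑u⁻¹ : A) • ((X ^ k : A[X]) • (1 - s) + (X ^ k * s - r)) := by
        rw [e1, smul_eq_mul, mul_sub, ← mul_assoc, ← C_mul, Units.inv_mul, C_1, one_mul]
      rw [e2]
      exact N.smul_mem _ (N.add_mem (N.smul_mem _ hsN) hr3)
  intro p hp
  obtain ⟨r, hr1, hr2, hr3⟩ := h p hp
  obtain ⟨r', h1, h2, h3⟩ := cut r hr1 hr2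
  refine ⟨C (r.coeff k) * t + r', ?_, ?_, ?_⟩
  · intro m
    rw [coeff_add]
    exact I.add_mem (coeff_mul_mem_left I _ _ ht1 m) (h1 m)
  · intro m hm
    rw [coeff_add, coeff_C_mul, ht2 m hm, h2 m hm]; simp
  · have : p - (C (r.coeff k) * t + r') = (p - r) + C (r.coeff k) • (X ^ k - t) := by
      rw [smul_eq_mul, mul_sub]
      have : r' = r - C (r.coeff k) * X ^ k := by
        rw [eq_sub_iff_add_eq, add_comm]; exact h3.symm
      rw [this]; abel
    rw [this]
    exact N.add_mem hr3 (N.smul_mem _ ht3)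

/-- Over a Jacobson pair `(A,I)`, monic polynomials are left coprime iff
their reductions mod `I` are left coprime. -/
theorem leftCoprime_iff_reduction {A : Type*} [Ring A] (I : TwoSidedIdeal A)
    (hJac : IsJacobsonPair I)
    (F1 F2 : A[X]) (h1 : F1.Monic) (h2 : F2.Monic) :
    LeftCoprime F1 F2 ↔
      LeftCoprime (F1.map I.ringCon.mk') (F2.map I.ringCon.mk') := by
  constructor
  · rintro ⟨g1, g2, h⟩
    refine ⟨g1.map I.ringCon.mk', g2.map I.ringCon.mk', ?_⟩
    rw [← Polynomial.map_mul, ← Polynomial.map_mul, ← Polynomial.map_add, h, Polynomial.map_one]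
  · rintro ⟨g1, g2, h⟩
    have hsurj : Function.Surjective I.ringCon.mk' := RingCon.mk'_surjective _
    obtain ⟨G1, rfl⟩ := Polynomial.map_surjective _ hsurj g1
    obtain ⟨G2, rfl⟩ := Polynomial.map_surjective _ hsurj g2
    let N : Submodule A[X] A[X] := Submodule.span A[X] {F1, F2}
    have hF1 : F1 ∈ N := Submodule.subset_span (by simp)
    have hF2 : F2 ∈ N := Submodule.subset_span (by simp)
    have hs : ∀ m, (1 - (G1 * F1 + G2 * F2)).coeff m ∈ I := by
      intro m
      have h0 : (1 - (G1 * F1 + G2 * F2)).map I.ringCon.mk' = 0 := by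
        rw [Polynomial.map_sub, Polynomial.map_add, Polynomial.map_mul, Polynomial.map_mul, h,
          Polynomial.map_one, sub_self]
      have h3 := congrArg (fun p => p.coeff m) h0
      simp only [coeff_map, coeff_zero] at h3
      rw [TwoSidedIdeal.mem_iff]
      exact (RingCon.eq _).1 h3
    have hmem : G1 * F1 + G2 * F2 ∈ N := N.add_mem (N.smul_mem G1 hF1) (N.smul_mem G2 hF2)
    have hsN : 1 - (1 - (G1 * F1 + G2 * F2)) ∈ N := by simpa using hmem
    have hall : ∀ j, LowRep I N j → LowRep I N 0 := by
      intro j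
      induction j with
      | zero => exact id
      | succ j ih => exact fun hj => ih (lowRep_step I hJac N _ hs hsN j hj)
    obtain ⟨r, _, hr, hr3⟩ := hall _ (lowRep_natDegree I N F1 h1 hF1) _ hs
    have hr0 : r = 0 := by ext m; simpa using hr m (Nat.zero_le _)
    rw [hr0, sub_zero] at hr3
    have hone : (1 : A[X]) ∈ N := by
      have := N.add_mem hr3 hmem
      simpa using this
    obtain ⟨a, b, hab⟩ := Submodule.mem_span_pair.1 hone
    exact ⟨a, b, by simpa using hab⟩
end

section
/- Let (A,I) be a pair and let I = I_1 ⊇ I_2 ⊇ ⋯ be a filtration on (A,I) such that (A,I) is F-commutative, F-separated and F-complete, and such that I_n·[A,A] ⊆ I_{n+1} and I_n² ⊆ I_{n+1} for all n ≥ 1. Then (A,I) is left Henselian: (A,I) is a Jacobson pair, and for every monic polynomial F(x) ∈ A[x] and every factorization F̄(x) = f1(x)·f2(x) with f1(x), f2(x) ∈ (A/I)[x] left coprime monic polynomials, there exist unique monic polynomials F1(x), F2(x) ∈ A[x] such that F(x) = F1(x)·F2(x), F̄1(x) = f1(x) and F̄2(x) = f2(x). -/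
open Polynomial

universe u

/-- Polynomials all of whose coefficients lie in `J`. -/
noncomputable def polyId {A : Type*} [Ring A] (J : TwoSidedIdeal A) : TwoSidedIdeal A[X] :=
  TwoSidedIdeal.ker (mapRingHom J.ringCon.mk')

lemma mk_eq_zero_iff {A : Type*} [Ring A] (J : TwoSidedIdeal A) (a : A) :
    J.ringCon.mk' a = 0 ↔ a ∈ J := by
  rw [← TwoSidedIdeal.mem_ker, TwoSidedIdeal.ker_ringCon_mk']

lemma mem_polyId_map {A : Type*} [Ring A] {J : TwoSidedIdeal A} {p : A[X]} :
    p ∈ polyId J ↔ p.map J.ringCon.mk' = 0 := by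
  rw [polyId, TwoSidedIdeal.mem_ker, coe_mapRingHom]

lemma mem_polyId {A : Type*} [Ring A] {J : TwoSidedIdeal A} {p : A[X]} :
    p ∈ polyId J ↔ ∀ k, p.coeff k ∈ J := by
  rw [mem_polyId_map, Polynomial.ext_iff]
  simp only [coeff_map, coeff_zero, mk_eq_zero_iff]

lemma sub_mem_polyId {A : Type*} [Ring A] {J : TwoSidedIdeal A} {p q : A[X]} :
    p - q ∈ polyId J ↔ p.map J.ringCon.mk' = q.map J.ringCon.mk' := by
  rw [mem_polyId_map, Polynomial.map_sub, sub_eq_zero]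

lemma polyId_div {A : Type*} [Ring A] {J : TwoSidedIdeal A} {p q : A[X]} (hq : q.Monic)
    (hp : p ∈ polyId J) : p /ₘ q ∈ polyId J ∧ p %ₘ q ∈ polyId J := by
  rw [mem_polyId_map] at hp
  rw [mem_polyId_map, mem_polyId_map, map_divByMonic _ hq, map_modByMonic _ hq, hp]
  simp

lemma polyId_cancel {A : Type*} [Ring A] {J : TwoSidedIdeal A} {M Q H : A[X]} (hM : M.Monic)
    (hd : H.degree < M.degree) (h : H - M * Q ∈ polyId J) : Q ∈ polyId J ∧ H ∈ polyId J := by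
  have h1 := polyId_div hM h
  obtain ⟨h2, h3⟩ := div_modByMonic_unique (f := H - M * Q) (-Q) H hM ⟨by noncomm_ring, hd⟩
  rw [h2, h3] at h1
  refine ⟨?_, h1.2⟩
  simpa using neg_mem h1.1

lemma polyId_mono {A : Type*} [Ring A] {J K : TwoSidedIdeal A} (h : J ≤ K) :
    polyId J ≤ polyId K := by
  intro p hp
  rw [mem_polyId] at *
  exact fun k => h (hp k)

lemma polyId_mul {A : Type*} [Ring A] {J K : TwoSidedIdeal A}
    (h : ∀ a ∈ J, ∀ b ∈ J, a * b ∈ K) {p q : A[X]} (hp : p ∈ polyId J) (hq : q ∈ polyId J) :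
    p * q ∈ polyId K := by
  rw [mem_polyId] at *
  intro k
  rw [coeff_mul]
  exact sum_mem fun x _ => h _ (hp _) _ (hq _)

lemma coeff_comm {A : Type*} [Ring A] (p q : A[X]) (k : ℕ) :
    (p * q - q * p).coeff k = ∑ x ∈ Finset.HasAntidiagonal.antidiagonal k,
      (p.coeff x.1 * q.coeff x.2 - q.coeff x.2 * p.coeff x.1) := by
  rw [coeff_sub, coeff_mul, coeff_mul, Finset.sum_sub_distrib,
    ← Finset.Nat.sum_antidiagonal_swap (f := fun x => q.coeff x.1 * p.coeff x.2)]
  rfl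

lemma polyId_comm {A : Type*} [Ring A] {J K : TwoSidedIdeal A}
    (h : ∀ a : A, ∀ b ∈ J, a * b - b * a ∈ K) (p : A[X]) {q : A[X]} (hq : q ∈ polyId J) :
    p * q - q * p ∈ polyId K := by
  rw [mem_polyId] at *
  intro k
  rw [coeff_comm]
  exact sum_mem fun x _ => h _ _ (hq _)

lemma polyId_mul_comm {A : Type*} [Ring A] {J K : TwoSidedIdeal A}
    (h : ∀ c ∈ J, ∀ a b : A, c * (a * b - b * a) ∈ K) {c : A[X]} (hc : c ∈ polyId J)
    (p q : A[X]) : c * (p * q - q * p) ∈ polyId K := by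
  rw [mem_polyId] at *
  intro k
  rw [coeff_mul]
  refine sum_mem fun x _ => ?_
  rw [coeff_comm, Finset.mul_sum]
  exact sum_mem fun y _ => h _ (hc _) _ _

lemma isJacobson_aux {A : Type*} [Ring A] (I : TwoSidedIdeal A)
    (Is : ℕ → TwoSidedIdeal A) (h0 : Is 0 = I)
    (hsep : ∀ x : A, (∀ n, x ∈ Is n) → x = 0)
    (hcomplete : ∀ a : ℕ → A, (∀ k, a (k + 1) - a k ∈ Is k) →
      ∃ x : A, ∀ k, x - a k ∈ Is k)
    (hsq : ∀ n, ∀ a ∈ Is n, ∀ b ∈ Is n, a * b ∈ Is (n + 1)) : IsJacobsonPair I := by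
  have key : ∀ a ∈ I, ∃ s : A, s - 1 ∈ I ∧ s * (1 + a) = 1 := by
    intro a ha
    let s : ℕ → A := fun n => Nat.rec 1 (fun _ t => (2 - t * (1 + a)) * t) n
    have hs1 : ∀ n, s (n + 1) = (2 - s n * (1 + a)) * s n := fun n => rfl
    have hs : ∀ n, s n * (1 + a) - 1 ∈ Is n := by
      intro n
      induction n with
      | zero => simpa [s, h0] using ha
      | succ n ih =>
        have := neg_mem (hsq n _ ih _ ih)
        rw [hs1]
        convert this using 1
        noncomm_ring
    obtain ⟨x, hx⟩ := hcomplete s (fun k => by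
      have := neg_mem ((Is k).mul_mem_right _ (s k) (hs k))
      rw [hs1]
      convert this using 1
      noncomm_ring)
    refine ⟨x, by simpa [s, h0] using hx 0, ?_⟩
    rw [← sub_eq_zero]
    refine hsep _ fun n => ?_
    have := add_mem ((Is n).mul_mem_right _ (1 + a) (hx n)) (hs n)
    convert this using 1
    noncomm_ring
  intro a ha
  obtain ⟨s, hs, hs'⟩ := key a ha
  obtain ⟨t, _, ht⟩ := key _ hs
  rw [add_sub_cancel] at ht
  have : t = 1 + a := by
    calc t = t * (s * (1 + a)) := by rw [hs', mul_one]
      _ = 1 + a := by rw [← mul_assoc, ht, one_mul]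
  exact ⟨⟨1 + a, s, by rw [← this, ht], hs'⟩, rfl⟩

lemma bezout_aux {A : Type*} [Ring A] (I : TwoSidedIdeal A)
    (Is : ℕ → TwoSidedIdeal A) (h0 : Is 0 = I)
    (hsq : ∀ n, ∀ a ∈ Is n, ∀ b ∈ Is n, a * b ∈ Is (n + 1))
    (F1 F2 : A[X]) (hc : LeftCoprime (F1.map I.ringCon.mk') (F2.map I.ringCon.mk')) (n : ℕ) :
    ∃ G1 G2 : A[X], G1 * F1 + G2 * F2 - 1 ∈ polyId (Is n) := by
  induction n with
  | zero =>
    obtain ⟨g1, g2, h⟩ := hc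
    obtain ⟨G1, rfl⟩ := map_surjective _ I.ringCon.mk'_surjective g1
    obtain ⟨G2, rfl⟩ := map_surjective _ I.ringCon.mk'_surjective g2
    refine ⟨G1, G2, ?_⟩
    rw [h0, sub_mem_polyId]
    simpa using h
  | succ n ih =>
    obtain ⟨G1, G2, h⟩ := ih
    refine ⟨(2 - (G1 * F1 + G2 * F2)) * G1, (2 - (G1 * F1 + G2 * F2)) * G2, ?_⟩
    have := neg_mem (polyId_mul (hsq n) h h)
    convert this using 1
    noncomm_ring

lemma step_aux {A : Type*} [Ring A] [Nontrivial A] (I : TwoSidedIdeal A)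
    (Is : ℕ → TwoSidedIdeal A) (h0 : Is 0 = I)
    (hFcomm : ∀ n, ∀ a : A, ∀ b ∈ Is n, a * b - b * a ∈ Is (n + 1))
    (hIcomm : ∀ n, ∀ c ∈ Is n, ∀ a b : A, c * (a * b - b * a) ∈ Is (n + 1))
    (hsq : ∀ n, ∀ a ∈ Is n, ∀ b ∈ Is n, a * b ∈ Is (n + 1))
    (n : ℕ) (F F1 F2 : A[X]) (hF : F.Monic) (hF1 : F1.Monic) (hF2 : F2.Monic)
    (hdeg : F.degree = (F1 * F2).degree)
    (hc : LeftCoprime (F1.map I.ringCon.mk') (F2.map I.ringCon.mk'))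
    (hE : F - F1 * F2 ∈ polyId (Is n)) :
    ∃ D1 D2 : A[X], D1.degree < F1.degree ∧ D2.degree < F2.degree ∧
      D1 ∈ polyId (Is n) ∧ D2 ∈ polyId (Is n) ∧
      F - (F1 + D1) * (F2 + D2) ∈ polyId (Is (n + 1)) := by
  obtain ⟨G1, G2, hG⟩ := bezout_aux I Is h0 hsq F1 F2 hc n
  have hM : (F1 * F2).Monic := hF1.mul hF2
  have hEd : (F - F1 * F2).degree < (F1 * F2).degree :=
    degree_sub_lt_right hdeg hM.ne_zero (by rw [hF.leadingCoeff, hM.leadingCoeff])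
  generalize hEe : F - F1 * F2 = E at *
  obtain ⟨hQ, hD1⟩ := polyId_div hF1 ((polyId (Is n)).mul_mem_right E G2 hE)
  have hdiv := modByMonic_add_div (E * G2) F1
  have hD1d := degree_modByMonic_lt (E * G2) hF1
  generalize (E * G2) /ₘ F1 = Q at *
  generalize (E * G2) %ₘ F1 = D1 at *
  have hD' : E * G1 + Q * F2 ∈ polyId (Is n) :=
    add_mem ((polyId _).mul_mem_right _ _ hE) ((polyId _).mul_mem_right _ _ hQ)
  obtain ⟨hQ2, hD2⟩ := polyId_div hF2 hD'
  have hdiv2 := modByMonic_add_div (E * G1 + Q * F2) F2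
  have hD2d := degree_modByMonic_lt (E * G1 + Q * F2) hF2
  generalize (E * G1 + Q * F2) /ₘ F2 = Q2 at *
  generalize (E * G1 + Q * F2) %ₘ F2 = D2 at *
  have e1 : D1 * F2 + F1 * (E * G1 + Q * F2) = E * G2 * F2 + F1 * E * G1 := by
    rw [← hdiv]; noncomm_ring
  have k1 : E - D1 * F2 - F1 * (E * G1 + Q * F2) ∈ polyId (Is (n + 1)) := by
    have a1 := polyId_mul (hsq n) hE hG
    have a2 := (polyId (Is (n + 1))).mul_mem_right _ G1 (polyId_comm (hFcomm n) F1 hE)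
    have a3 := polyId_mul_comm (hIcomm n) hE F1 G1
    have := neg_mem (add_mem (add_mem a1 a2) a3)
    rw [sub_sub, e1]
    convert this using 1
    noncomm_ring
  have k2 : (E - D1 * F2 - F1 * D2) - (F1 * F2) * Q2 ∈ polyId (Is (n + 1)) := by
    rw [← hdiv2] at k1
    convert k1 using 1
    noncomm_ring
  have hd1 : (D1 * F2).degree < (F1 * F2).degree := by
    rw [hF2.degree_mul, hF2.degree_mul]
    exact WithBot.add_lt_add_right (by simpa using hF2.ne_zero) hD1d
  have hd2 : (F1 * D2).degree < (F1 * F2).degree := by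
    rw [hF1.degree_mul_comm, hF1.degree_mul_comm, hF1.degree_mul, hF1.degree_mul]
    exact WithBot.add_lt_add_right (by simpa using hF1.ne_zero) hD2d
  have hdd : (E - D1 * F2 - F1 * D2).degree < (F1 * F2).degree :=
    (degree_sub_le _ _).trans_lt (max_lt ((degree_sub_le _ _).trans_lt (max_lt hEd hd1)) hd2)
  obtain ⟨_, hH⟩ := polyId_cancel hM hdd k2
  refine ⟨D1, D2, hD1d, hD2d, hD1, hD2, ?_⟩
  have := sub_mem hH (polyId_mul (hsq n) hD1 hD2)
  convert this using 1
  rw [← hEe]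
  noncomm_ring

lemma unique_aux {A : Type*} [Ring A] [Nontrivial A] (I : TwoSidedIdeal A)
    (Is : ℕ → TwoSidedIdeal A) (h0 : Is 0 = I)
    (hFcomm : ∀ n, ∀ a : A, ∀ b ∈ Is n, a * b - b * a ∈ Is (n + 1))
    (hIcomm : ∀ n, ∀ c ∈ Is n, ∀ a b : A, c * (a * b - b * a) ∈ Is (n + 1))
    (hsq : ∀ n, ∀ a ∈ Is n, ∀ b ∈ Is n, a * b ∈ Is (n + 1))
    (F1 F2 D1 D2 : A[X]) (hF1 : F1.Monic)
    (hd1 : D1.degree < F1.degree)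
    (hc : LeftCoprime (F1.map I.ringCon.mk') (F2.map I.ringCon.mk'))
    (h1 : D1 ∈ polyId I) (h2 : D2 ∈ polyId I) (hE : (F1 + D1) * (F2 + D2) = F1 * F2) (n : ℕ) :
    D1 ∈ polyId (Is n) ∧ D2 ∈ polyId (Is n) := by
  induction n with
  | zero => rw [h0]; exact ⟨h1, h2⟩
  | succ n ih =>
    obtain ⟨i1, i2⟩ := ih
    obtain ⟨G1, G2, hG⟩ := bezout_aux I Is h0 hsq F1 F2 hc n
    have hE' : D1 * F2 = - (F1 * D2) - D1 * D2 := by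
      have : D1 * F2 = (F1 + D1) * (F2 + D2) - F1 * F2 - F1 * D2 - D1 * D2 := by noncomm_ring
      rw [this, hE]; noncomm_ring
    have hDD := polyId_mul (hsq n) i1 i2
    have k : D1 - F1 * (D1 * G1 - D2 * G2) ∈ polyId (Is (n + 1)) := by
      have a1 := polyId_mul (hsq n) i1 hG
      have a2 := (polyId (Is (n + 1))).mul_mem_right _ G1 (polyId_comm (hFcomm n) F1 i1)
      have a3 := polyId_mul_comm (hIcomm n) i1 F1 G1
      have a4 := polyId_mul_comm (hIcomm n) i1 F2 G2
      have a5 := (polyId (Is (n + 1))).mul_mem_right _ G2 hDD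
      have := neg_mem (add_mem (add_mem (add_mem (add_mem a1 a2) a3) a4) a5)
      convert this using 1
      have e : D1 * (F2 * G2) = - (F1 * D2 * G2) - D1 * D2 * G2 := by
        rw [← mul_assoc, hE']; noncomm_ring
      simp only [mul_sub, e]
      noncomm_ring
    obtain ⟨_, j1⟩ := polyId_cancel hF1 hd1 k
    refine ⟨j1, ?_⟩
    have : (0 : A[X]) - F1 * D2 ∈ polyId (Is (n + 1)) := by
      have := add_mem ((polyId (Is (n + 1))).mul_mem_right _ F2 j1) hDD
      rw [hE'] at this
      convert this using 1
      noncomm_ring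
    exact (polyId_cancel hF1 (by rw [degree_zero, bot_lt_iff_ne_bot]; simpa using hF1.ne_zero) this).1

lemma limit_aux {A : Type*} [Ring A] [Nontrivial A]
    (Is : ℕ → TwoSidedIdeal A)
    (hcomplete : ∀ a : ℕ → A, (∀ k, a (k + 1) - a k ∈ Is k) →
      ∃ x : A, ∀ k, x - a k ∈ Is k)
    (P : ℕ → A[X]) (d : ℕ) (hm : ∀ k, (P k).Monic) (hd : ∀ k, (P k).natDegree = d)
    (hP : ∀ k, P (k + 1) - P k ∈ polyId (Is k)) :
    ∃ L : A[X], L.Monic ∧ ∀ k, L - P k ∈ polyId (Is k) := by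
  have : ∀ i, ∃ x : A, ∀ k, x - (P k).coeff i ∈ Is k := fun i =>
    hcomplete _ fun k => by simpa using mem_polyId.1 (hP k) i
  choose x hx using this
  have hlt : (∑ i ∈ Finset.range d, C (x i) * X ^ i : A[X]).degree < (d : WithBot ℕ) := by
    refine (degree_sum_le _ _).trans_lt ((Finset.sup_lt_iff (WithBot.bot_lt_coe d)).2 ?_)
    intro i hi
    exact (degree_C_mul_X_pow_le i (x i)).trans_lt (Nat.cast_lt.2 (Finset.mem_range.1 hi))
  refine ⟨X ^ d + ∑ i ∈ Finset.range d, C (x i) * X ^ i, monic_X_pow_add hlt, fun k => ?_⟩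
  rw [mem_polyId]
  intro i
  have hc : (∑ i ∈ Finset.range d, C (x i) * X ^ i : A[X]).coeff i = if i < d then x i else 0 := by
    simp [coeff_C_mul, coeff_X_pow]
  rw [coeff_sub, coeff_add, hc, coeff_X_pow]
  rcases lt_trichotomy i d with h | h | h
  · simpa [h, h.ne] using hx i k
  · have : (P k).coeff i = 1 := by rw [h, ← hd k]; exact hm k
    rw [this]; simp [h, (Is k).zero_mem]
  · have : (P k).coeff i = 0 := coeff_eq_zero_of_natDegree_lt (by rw [hd k]; exact h)
    simp [this, h.ne', h.not_gt, (Is k).zero_mem]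

/-- Theorem `HenselianRings`: if `(A,I)` has a filtration with respect to
which it is F-commutative, F-separated and F-complete, and `Iₙ·[A,A] ⊆ Iₙ₊₁` and
`Iₙ² ⊆ Iₙ₊₁` for all `n`, then `(A,I)` is left Henselian.  (`Is n` denotes `I_{n+1}`.) -/
theorem leftHenselian_of_filtration {A : Type*} [Ring A] (I : TwoSidedIdeal A)
    (Is : ℕ → TwoSidedIdeal A) (h0 : Is 0 = I)
    (hdesc : ∀ n, Is (n + 1) ≤ Is n)
    (hFcomm : ∀ n, ∀ a : A, ∀ b ∈ Is n, a * b - b * a ∈ Is (n + 1))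
    (hsep : ∀ x : A, (∀ n, x ∈ Is n) → x = 0)
    (hcomplete : ∀ a : ℕ → A, (∀ k, a (k + 1) - a k ∈ Is k) →
      ∃ x : A, ∀ k, x - a k ∈ Is k)
    (hIcomm : ∀ n, ∀ c ∈ Is n, ∀ a b : A, c * (a * b - b * a) ∈ Is (n + 1))
    (hsq : ∀ n, ∀ a ∈ Is n, ∀ b ∈ Is n, a * b ∈ Is (n + 1)) :
    IsLeftHenselianPair I := by
  refine ⟨isJacobson_aux I Is h0 hsep hcomplete hsq, ?_⟩
  intro F hF f1 f2 hf1 hf2 hc hmap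
  rcases subsingleton_or_nontrivial A with hA | hA
  · have hQ : Subsingleton I.ringCon.Quotient := I.ringCon.mk'_surjective.subsingleton
    refine ⟨(1, 1), ⟨monic_one, monic_one, Subsingleton.elim _ _, Subsingleton.elim _ _,
      Subsingleton.elim _ _⟩, fun _ _ => Subsingleton.elim _ _⟩
  have hle : ∀ n, Is n ≤ I := by
    intro n
    induction n with
    | zero => exact h0.le
    | succ n ih => exact (hdesc n).trans ih
  have hsepP : ∀ p : A[X], (∀ n, p ∈ polyId (Is n)) → p = 0 := by
    intro p hp
    ext k
    exact hsep _ fun n => mem_polyId.1 (hp n) k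
  have hQ : Nontrivial I.ringCon.Quotient := by
    refine ⟨1, 0, fun h => ?_⟩
    rw [← map_one I.ringCon.mk', mk_eq_zero_iff] at h
    refine one_ne_zero (α := A) (hsep 1 fun n => ?_)
    induction n with
    | zero => rwa [h0]
    | succ n ih => simpa using hsq n 1 ih 1 ih
  have hdegF : F.natDegree = f1.natDegree + f2.natDegree := by
    rw [← hF.natDegree_map I.ringCon.mk', hmap, hf1.natDegree_mul hf2]
  have hdeg : ∀ P1 P2 : A[X], P1.Monic → P2.Monic → P1.map I.ringCon.mk' = f1 →
      P2.map I.ringCon.mk' = f2 → F.degree = (P1 * P2).degree := by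
    intro P1 P2 h1 h2 e1 e2
    rw [degree_eq_natDegree hF.ne_zero, degree_eq_natDegree (h1.mul h2).ne_zero, hdegF,
      h1.natDegree_mul h2, ← e1, ← e2, h1.natDegree_map, h2.natDegree_map]
  have hex : ∃ p : A[X] × A[X], p.1.Monic ∧ p.2.Monic ∧ F = p.1 * p.2 ∧
        p.1.map I.ringCon.mk' = f1 ∧ p.2.map I.ringCon.mk' = f2 := by
    let T : ℕ → A[X] × A[X] → Prop := fun n p => p.1.Monic ∧ p.2.Monic ∧
      p.1.map I.ringCon.mk' = f1 ∧ p.2.map I.ringCon.mk' = f2 ∧ F - p.1 * p.2 ∈ polyId (Is n)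
    have hT0 : ∃ p, T 0 p := by
      obtain ⟨P1, a1, _, b1⟩ := lifts_and_natDegree_eq_and_monic (f := I.ringCon.mk')
        ((mem_lifts _).2 (map_surjective _ I.ringCon.mk'_surjective f1)) hf1
      obtain ⟨P2, a2, _, b2⟩ := lifts_and_natDegree_eq_and_monic (f := I.ringCon.mk')
        ((mem_lifts _).2 (map_surjective _ I.ringCon.mk'_surjective f2)) hf2
      refine ⟨(P1, P2), b1, b2, a1, a2, ?_⟩
      rw [h0, sub_mem_polyId, hmap, Polynomial.map_mul, a1, a2]
    have hTs : ∀ n p, T n p → ∃ q, T (n + 1) q ∧ q.1 - p.1 ∈ polyId (Is n) ∧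
        q.2 - p.2 ∈ polyId (Is n) := by
      rintro n ⟨P1, P2⟩ ⟨b1, b2, a1, a2, hE⟩
      obtain ⟨D1, D2, d1, d2, m1, m2, hh⟩ := step_aux I Is h0 hFcomm hIcomm hsq n F P1 P2 hF b1 b2
        (hdeg _ _ b1 b2 a1 a2) (by rw [a1, a2]; exact hc) hE
      have z1 := mem_polyId_map.1 (polyId_mono (hle n) m1)
      have z2 := mem_polyId_map.1 (polyId_mono (hle n) m2)
      refine ⟨(P1 + D1, P2 + D2), ⟨b1.add_of_left d1, b2.add_of_left d2, ?_, ?_, hh⟩, ?_, ?_⟩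
      · simp only [Polynomial.map_add, z1, add_zero]; exact a1
      · simp only [Polynomial.map_add, z2, add_zero]; exact a2
      · simpa using m1
      · simpa using m2
    obtain ⟨p0, hp0⟩ := hT0
    choose! nx hnx using hTs
    let s : ℕ → A[X] × A[X] := fun n => Nat.rec p0 (fun k p => nx k p) n
    have hs : ∀ n, T n (s n) := by
      intro n
      induction n with
      | zero => exact hp0
      | succ n ih => exact (hnx n _ ih).1
    obtain ⟨L1, l1, m1⟩ := limit_aux Is hcomplete (fun n => (s n).1) f1.natDegree
      (fun k => (hs k).1)
      (fun k => by rw [← (hs k).2.2.1, (hs k).1.natDegree_map])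
      (fun k => (hnx k _ (hs k)).2.1)
    obtain ⟨L2, l2, m2⟩ := limit_aux Is hcomplete (fun n => (s n).2) f2.natDegree
      (fun k => (hs k).2.1)
      (fun k => by rw [← (hs k).2.2.2.1, (hs k).2.1.natDegree_map])
      (fun k => (hnx k _ (hs k)).2.2)
    refine ⟨(L1, L2), l1, l2, ?_, ?_, ?_⟩
    · rw [← sub_eq_zero]
      refine hsepP _ fun n => ?_
      have := sub_mem (sub_mem (hs n).2.2.2.2 ((polyId (Is n)).mul_mem_right _ (s n).2 (m1 n)))
        ((polyId (Is n)).mul_mem_left L1 _ (m2 n))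
      convert this using 1
      noncomm_ring
    · have := m1 0
      rw [h0, sub_mem_polyId] at this
      exact this.trans (hs 0).2.2.1
    · have := m2 0
      rw [h0, sub_mem_polyId] at this
      exact this.trans (hs 0).2.2.2.1
  obtain ⟨⟨P1, P2⟩, b1, b2, hp, a1, a2⟩ := hex
  refine ⟨(P1, P2), ⟨b1, b2, hp, a1, a2⟩, ?_⟩
  rintro ⟨H1, H2⟩ ⟨c1, c2, hq, e1, e2⟩
  dsimp only at *
  have hd1 : (H1 - P1).degree < P1.degree := by
    refine degree_sub_lt_right ?_ b1.ne_zero (by rw [b1.leadingCoeff, c1.leadingCoeff])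
    rw [← c1.degree_map I.ringCon.mk', ← b1.degree_map I.ringCon.mk', a1, e1]
  have := unique_aux I Is h0 hFcomm hIcomm hsq P1 P2 (H1 - P1) (H2 - P2) b1 hd1
    (by rw [a1, a2]; exact hc) (sub_mem_polyId.2 (e1.trans a1.symm))
    (sub_mem_polyId.2 (e2.trans a2.symm))
    (by rw [add_sub_cancel, add_sub_cancel, ← hq, ← hp])
  rw [Prod.mk.injEq]
  exact ⟨sub_eq_zero.1 (hsepP _ fun n => (this n).1), sub_eq_zero.1 (hsepP _ fun n => (this n).2)⟩
end

section
/- Let (A,I) be a perfect pair, let F(x) ∈ A[x] be a monic polynomial, and suppose F̄(x) = f1(x)·f2(x) where f1(x), f2(x) ∈ (A/I)[x] are left coprime monic polynomials. Then there exist a perfect Jacobson pair (B,J), a morphism of pairs Φ:(A,I)→(B,J), and monic polynomials F1(x), F2(x) ∈ B[x] such that Φ(F)(x) = F1(x)·F2(x), with the reduction of F1 modulo J equal to the image of f1 and the reduction of F2 modulo J equal to the image of f2 under the induced map (A/I)[x]→(B/J)[x], and with the following universal property: for every morphism of pairs φ:(A,I)→(C,K) with (C,K) a perfect Jacobson pair,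 if φ(F)(x) = G1(x)·G2(x) for monic polynomials G1(x), G2(x) ∈ C[x] whose reductions modulo K equal the images of f1(x) and f2(x) respectively, then there exists a unique morphism of pairs ψ:(B,J)→(C,K) with φ = ψ∘Φ. -/
open Polynomial

universe u

theorem pairs_mk_eq {R : Type*} [Ring R] (I : TwoSidedIdeal R) (x y : R) :
    I.ringCon.mk' x = I.ringCon.mk' y ↔ x - y ∈ I := by
  rw [← TwoSidedIdeal.rel_iff]
  exact I.ringCon.eq

theorem pairs_mk_zero {R : Type*} [Ring R] (I : TwoSidedIdeal R) (x : R) :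
    I.ringCon.mk' x = 0 ↔ x ∈ I := by
  rw [← map_zero I.ringCon.mk', pairs_mk_eq, sub_zero]

theorem pairs_commFilt_map {R S : Type*} [Ring R] [Ring S] (I : TwoSidedIdeal R)
    (J : TwoSidedIdeal S) (φ : R →+* S) (h : ∀ x ∈ I, φ x ∈ J) (n : ℕ) :
    ∀ x ∈ commFilt I n, φ x ∈ commFilt J n := by
  induction n with
  | zero => exact h
  | succ n ih =>
    have : commFilt I (n+1) ≤ (commFilt J (n+1)).comap φ := by
      refine TwoSidedIdeal.span_le.2 ?_
      rintro x ⟨a, b, hb, rfl⟩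
      show _ ∈ TwoSidedIdeal.comap φ _
      rw [TwoSidedIdeal.mem_comap]
      refine TwoSidedIdeal.subset_span ⟨φ a, φ b, ih b hb, by simp⟩
    intro x hx
    have := this hx
    rwa [TwoSidedIdeal.mem_comap] at this

theorem pairs_comm_mem {R : Type*} [Ring R] (I : TwoSidedIdeal R) (n : ℕ) (a b : R)
    (hb : b ∈ commFilt I n) : a * b - b * a ∈ commFilt I (n+1) :=
  TwoSidedIdeal.subset_span ⟨a, b, hb, rfl⟩

theorem pairs_mem_jacobson {R : Type*} [Ring R] (I : TwoSidedIdeal R) (h : IsJacobsonPair I)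
    (x : R) (hx : x ∈ I) : x ∈ Ring.jacobson R := by
  rw [Ring.jacobson_eq_sInf_isMaximal, Ideal.mem_sInf]
  intro M hM
  by_contra hxM
  obtain ⟨y, i, hi, e⟩ := Ideal.IsMaximal.exists_inv hM hxM
  have hu : IsUnit i := by
    have := h _ (I.neg_mem (I.mul_mem_left y x hx))
    rwa [← e, add_comm, neg_add_cancel_left] at this
  exact hM.ne_top (Ideal.eq_top_of_isUnit_mem _ hi hu)

theorem pairs_division {R : Type*} [Ring R] (G : R[X]) (hG : G.Monic) (n : ℕ) :
    ∀ p : R[X], p.degree < (n : WithBot ℕ) →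
      ∃ q r : R[X], p = q * G + r ∧ r.degree < (G.natDegree : WithBot ℕ) := by
  induction n with
  | zero =>
    intro p hp
    exact ⟨0, p, by simp, lt_of_lt_of_le hp (by exact_mod_cast Nat.zero_le _)⟩
  | succ n ih =>
    intro p hp
    by_cases hn : n < G.natDegree
    · exact ⟨0, p, by simp, lt_of_lt_of_le hp (by exact_mod_cast hn)⟩
    · push Not at hn
      obtain ⟨q, r, e, hr⟩ := ih (p - (C (p.coeff n) * X ^ (n - G.natDegree)) * G) (by
        rw [degree_lt_iff_coeff_zero]
        intro m hm
        rw [degree_lt_iff_coeff_zero] at hp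
        rw [coeff_sub, mul_assoc, coeff_C_mul, coeff_X_pow_mul', if_pos (by omega)]
        rcases hm.eq_or_lt with rfl | hm
        · rw [Nat.sub_sub_self hn, hG.coeff_natDegree]; simp
        · rw [hp m hm, coeff_eq_zero_of_natDegree_lt (p := G) (by omega)]; simp)
      refine ⟨C (p.coeff n) * X ^ (n - G.natDegree) + q, r, ?_, hr⟩
      rw [add_mul, add_assoc, ← e]; abel

theorem pairs_lift_coprime {R : Type*} [Ring R] (I : TwoSidedIdeal R) (h : IsJacobsonPair I)
    (G H : R[X]) (hG : G.Monic)
    (hc : LeftCoprime (G.map I.ringCon.mk') (H.map I.ringCon.mk')) : LeftCoprime G H := by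
  classical
  obtain ⟨g1, g2, hg⟩ := hc
  obtain ⟨g1, rfl⟩ := map_surjective _ I.ringCon.mk'_surjective g1
  obtain ⟨g2, rfl⟩ := map_surjective _ I.ringCon.mk'_surjective g2
  let L : Ideal R[X] := Ideal.span {G, H}
  let N : Submodule R R[X] := L.restrictScalars R
  have hGL : G ∈ L := Ideal.subset_span (by simp)
  have hHL : H ∈ L := Ideal.subset_span (by simp)
  have fg : (⊤ : Submodule R (R[X] ⧸ N)).FG := by
    refine ⟨(Finset.range G.natDegree).image (fun i => N.mkQ (X ^ i)), ?_⟩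
    rw [eq_top_iff]
    rintro y -
    obtain ⟨p, rfl⟩ := N.mkQ_surjective y
    obtain ⟨q, r, rfl, hr⟩ := pairs_division G hG (p.natDegree + 1) p
      (lt_of_le_of_lt degree_le_natDegree (by exact_mod_cast Nat.lt_succ_self _))
    have h0 : N.mkQ (q * G) = 0 := by
      rw [Submodule.mkQ_apply, Submodule.Quotient.mk_eq_zero]
      exact L.mul_mem_left q hGL
    rw [map_add, h0, zero_add]
    have hr' : r = ∑ i ∈ Finset.range G.natDegree, r.coeff i • (X ^ i : R[X]) := by
      ext m
      simp only [finsetSum_coeff, coeff_smul, coeff_X_pow, smul_eq_mul, mul_ite, mul_one, mul_zero,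
        Finset.sum_ite_eq, Finset.mem_range]
      split_ifs with hm
      · rfl
      · exact (degree_lt_iff_coeff_zero _ _).1 hr m (by omega)
    rw [hr', map_sum]
    refine Submodule.sum_mem _ fun i hi => ?_
    rw [map_smul]
    exact Submodule.smul_mem _ _ (Submodule.subset_span (by
      simp only [Finset.coe_image]; exact ⟨i, hi, rfl⟩))
  have key : (⊤ : Submodule R (R[X] ⧸ N)) = ⊥ := by
    refine Submodule.FG.eq_bot_of_le_jacobson_smul fg ?_
    rintro y -
    obtain ⟨p, rfl⟩ := N.mkQ_surjective y
    set k : R[X] := p * (1 - (g1 * G + g2 * H)) with hk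
    have hkI : ∀ i, k.coeff i ∈ I := by
      intro i
      rw [← pairs_mk_zero, ← coeff_map, hk]
      simp [hg]
    have hp : p = k + p * (g1 * G + g2 * H) := by rw [hk]; noncomm_ring
    have h0 : N.mkQ (p * (g1 * G + g2 * H)) = 0 := by
      rw [Submodule.mkQ_apply, Submodule.Quotient.mk_eq_zero]
      exact L.mul_mem_left _ (L.add_mem (L.mul_mem_left _ hGL) (L.mul_mem_left _ hHL))
    rw [hp, map_add, h0, add_zero, k.as_sum_range, map_sum]
    refine Submodule.sum_mem _ fun i hi => ?_
    rw [← smul_X_eq_monomial, map_smul]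
    exact Submodule.smul_mem_smul (pairs_mem_jacobson I h _ (hkI i)) trivial
  have h1 : N.mkQ 1 = 0 := by
    have : N.mkQ 1 ∈ (⊤ : Submodule R (R[X] ⧸ N)) := trivial
    rw [key] at this
    simpa using this
  rw [Submodule.mkQ_apply, Submodule.Quotient.mk_eq_zero] at h1
  exact Ideal.mem_span_pair.1 h1

theorem pairs_step {R : Type*} [Ring R] (G1 G2 H1 H2 : R[X]) (hG1 : G1.Monic) (hH1 : H1.Monic)
    (hd : G1.natDegree = H1.natDegree) (he : G1 * G2 = H1 * H2)
    (hcop : LeftCoprime G1 H2)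
    (c1 : ∀ p : R[X], p * (H1 - G1) = (H1 - G1) * p)
    (c2 : ∀ p : R[X], p * (H2 - G2) = (H2 - G2) * p) : G1 = H1 ∧ G2 = H2 := by
  nontriviality R
  have hrel : (H1 - G1) * H2 = - ((H2 - G2) * G1) := by
    rw [← c2, sub_mul, ← he]; noncomm_ring
  obtain ⟨g1, g2, hg⟩ := hcop
  have hD : H1 - G1 = ((H1 - G1) * g1 - g2 * (H2 - G2)) * G1 := by
    calc H1 - G1 = (H1 - G1) * (g1 * G1 + g2 * H2) := by rw [hg, mul_one]
      _ = (H1 - G1) * g1 * G1 + ((H1 - G1) * g2) * H2 := by rw [mul_add, mul_assoc, mul_assoc]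
      _ = (H1 - G1) * g1 * G1 + g2 * ((H1 - G1) * H2) := by rw [← c1 g2, mul_assoc g2]
      _ = _ := by rw [hrel]; noncomm_ring
  have hdeg : (H1 - G1).degree < G1.degree := by
    have := degree_sub_lt_right (p := H1) (q := G1)
      (by rw [degree_eq_natDegree hG1.ne_zero, degree_eq_natDegree hH1.ne_zero, hd]) hG1.ne_zero
      (by rw [hG1.leadingCoeff, hH1.leadingCoeff])
    exact this
  have hq : ((H1 - G1) * g1 - g2 * (H2 - G2)) = 0 := by
    by_contra hne
    rw [hD, hG1.degree_mul] at hdeg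
    have h2 : (0 : WithBot ℕ) ≤ ((H1 - G1) * g1 - g2 * (H2 - G2)).degree :=
      zero_le_degree_iff.2 hne
    have h3 : G1.degree ≤ ((H1 - G1) * g1 - g2 * (H2 - G2)).degree + G1.degree := by
      calc G1.degree = 0 + G1.degree := (zero_add _).symm
        _ ≤ _ := by gcongr
    exact absurd hdeg (not_lt.2 h3)
  have e1 : H1 - G1 = 0 := by rw [hD, hq, zero_mul]
  have e2 : H2 - G2 = 0 := by
    rw [e1, zero_mul, eq_comm, neg_eq_zero, hG1.mul_left_eq_zero_iff] at hrel
    exact hrel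
  exact ⟨(sub_eq_zero.1 e1).symm, (sub_eq_zero.1 e2).symm⟩

theorem pairs_trivial {R : Type*} [Ring R] (K : TwoSidedIdeal R) (hJ : IsJacobsonPair K)
    (h : Subsingleton K.ringCon.Quotient) : Subsingleton R := by
  have h1 : (1 : R) ∈ K := by rw [← pairs_mk_zero]; exact Subsingleton.elim _ _
  have := hJ _ (K.neg_mem h1)
  rw [add_neg_cancel, isUnit_zero_iff] at this
  exact subsingleton_of_zero_eq_one this

theorem pairs_map_eq {R : Type*} [Ring R] (K : TwoSidedIdeal R) (P Q : R[X]) :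
    P.map K.ringCon.mk' = Q.map K.ringCon.mk' ↔ ∀ i, Q.coeff i - P.coeff i ∈ K := by
  rw [Polynomial.ext_iff]
  refine forall_congr' fun i => ?_
  rw [coeff_map, coeff_map, eq_comm, pairs_mk_eq]

theorem pairs_unique {R : Type*} [Ring R] (K : TwoSidedIdeal R) (hJ : IsJacobsonPair K)
    (hP : IsPerfectPair K) (G1 G2 H1 H2 : R[X]) (hG1 : G1.Monic) (hH1 : H1.Monic)
    (he : G1 * G2 = H1 * H2)
    (hc : LeftCoprime (G1.map K.ringCon.mk') (G2.map K.ringCon.mk'))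
    (h1 : G1.map K.ringCon.mk' = H1.map K.ringCon.mk')
    (h2 : G2.map K.ringCon.mk' = H2.map K.ringCon.mk') : G1 = H1 ∧ G2 = H2 := by
  rcases subsingleton_or_nontrivial K.ringCon.Quotient with hs | hn
  · have := pairs_trivial K hJ hs
    exact ⟨Subsingleton.elim _ _, Subsingleton.elim _ _⟩
  have hd : G1.natDegree = H1.natDegree := by
    rw [← hG1.natDegree_map K.ringCon.mk', ← hH1.natDegree_map K.ringCon.mk', h1]
  have hcop : LeftCoprime G1 H2 := by
    refine pairs_lift_coprime K hJ _ _ hG1 ?_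
    rw [← h2]; exact hc
  have main : ∀ n, (∀ i, H1.coeff i - G1.coeff i ∈ commFilt K n) ∧
      (∀ i, H2.coeff i - G2.coeff i ∈ commFilt K n) := by
    intro n
    induction n with
    | zero => exact ⟨(pairs_map_eq K _ _).1 h1, (pairs_map_eq K _ _).1 h2⟩
    | succ n ih =>
      rw [← pairs_map_eq, ← pairs_map_eq]
      rcases subsingleton_or_nontrivial (commFilt K (n+1)).ringCon.Quotient with hs | hn
      · exact ⟨Subsingleton.elim _ _, Subsingleton.elim _ _⟩
      set π := (commFilt K (n+1)).ringCon.mk' with hπ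
      have cen : ∀ P Q : R[X], (∀ i, Q.coeff i - P.coeff i ∈ commFilt K n) →
          ∀ p, p * (Q.map π - P.map π) = (Q.map π - P.map π) * p := by
        intro P Q hPQ p
        obtain ⟨p, rfl⟩ := map_surjective _ (commFilt K (n+1)).ringCon.mk'_surjective p
        rw [← Polynomial.map_sub, ← hπ, ← Polynomial.map_mul, ← Polynomial.map_mul]
        ext m
        rw [coeff_map, coeff_map, coeff_mul, coeff_mul, ← Finset.Nat.sum_antidiagonal_swap,
          map_sum, map_sum]
        refine Finset.sum_congr rfl fun x hx => ?_
        rw [hπ, pairs_mk_eq]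
        refine pairs_comm_mem K n _ _ ?_
        rw [coeff_sub]; exact hPQ _
      refine pairs_step _ _ _ _ (hG1.map π) (hH1.map π) ?_ ?_ ?_ (cen _ _ ih.1) (cen _ _ ih.2)
      · rw [hG1.natDegree_map, hH1.natDegree_map, hd]
      · rw [← Polynomial.map_mul, he, Polynomial.map_mul]
      · obtain ⟨a, b, hab⟩ := hcop
        exact ⟨a.map π, b.map π, by
          rw [← Polynomial.map_mul, ← Polynomial.map_mul, ← Polynomial.map_add, hab,
            Polynomial.map_one]⟩
  constructor
  · ext i
    exact (sub_eq_zero.1 (hP _ fun n => (main n).1 i)).symm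
  · ext i
    exact (sub_eq_zero.1 (hP _ fun n => (main n).2 i)).symm


inductive PTm (A : Type u) : Type u
  | atom (a : A) : PTm A
  | v1 (n : ℕ) : PTm A
  | v2 (n : ℕ) : PTm A
  | add (s t : PTm A) : PTm A
  | mul (s t : PTm A) : PTm A
  | neg (t : PTm A) : PTm A
  | inv (t : PTm A) : PTm A

structure PDat {A : Type u} [Ring A] (I : TwoSidedIdeal A) (F : A[X])
    (f1 f2 : (I.ringCon.Quotient)[X]) : Type (u+1) where
  C : Type u
  ring : Ring C
  K : TwoSidedIdeal C
  φ : A →+* C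
  φbar : I.ringCon.Quotient →+* K.ringCon.Quotient
  G1 : C[X]
  G2 : C[X]
  hom : IsPairHom I K φ
  perf : IsPerfectPair K
  jac : IsJacobsonPair K
  comm : φbar.comp I.ringCon.mk' = K.ringCon.mk'.comp φ
  monic1 : G1.Monic
  monic2 : G2.Monic
  fact : F.map φ = G1 * G2
  red1 : G1.map K.ringCon.mk' = f1.map φbar
  red2 : G2.map K.ringCon.mk' = f2.map φbar

namespace PDat

variable {A : Type u} [Ring A] {I : TwoSidedIdeal A} {F : A[X]}
    {f1 f2 : (I.ringCon.Quotient)[X]}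

instance (D : PDat I F f1 f2) : Ring D.C := D.ring

open Classical in
noncomputable def ev (D : PDat I F f1 f2) : PTm A → D.C
  | .atom a => D.φ a
  | .v1 n => D.G1.coeff n
  | .v2 n => D.G2.coeff n
  | .add s t => ev D s + ev D t
  | .mul s t => ev D s * ev D t
  | .neg t => - ev D t
  | .inv t => if ev D t ∈ D.K then Ring.inverse (1 + ev D t) else 0

theorem φbar_mk (D : PDat I F f1 f2) (a : A) :
    D.φbar (I.ringCon.mk' a) = D.K.ringCon.mk' (D.φ a) := RingHom.congr_fun D.comm a

theorem φbar_zero (D : PDat I F f1 f2) (x : I.ringCon.Quotient) : D.φbar x = 0 ↔ x = 0 := by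
  obtain ⟨a, rfl⟩ := I.ringCon.mk'_surjective x
  rw [φbar_mk, pairs_mk_zero, pairs_mk_zero]
  exact D.hom a

theorem coeff_zero (D : PDat I F f1 f2) (G : D.C[X]) (hG : G.Monic)
    (f : (I.ringCon.Quotient)[X]) (h : G.map D.K.ringCon.mk' = f.map D.φbar) (n : ℕ)
    (hn : f.natDegree < n) : G.coeff n = 0 := by
  rcases subsingleton_or_nontrivial D.K.ringCon.Quotient with hs | hs
  · have := pairs_trivial D.K D.jac hs
    exact Subsingleton.elim _ _
  · refine coeff_eq_zero_of_natDegree_lt ?_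
    rw [← hG.natDegree_map D.K.ringCon.mk', h]
    exact lt_of_le_of_lt natDegree_map_le hn

theorem coeff_one (D : PDat I F f1 f2) (G : D.C[X]) (hG : G.Monic)
    (f : (I.ringCon.Quotient)[X]) (hf : f.Monic)
    (h : G.map D.K.ringCon.mk' = f.map D.φbar) : G.coeff f.natDegree = 1 := by
  rcases subsingleton_or_nontrivial D.K.ringCon.Quotient with hs | hs
  · have := pairs_trivial D.K D.jac hs
    exact Subsingleton.elim _ _
  · rw [← hf.natDegree_map D.φbar, ← h, hG.natDegree_map]
    exact hG

/-- The base datum `(A/I, 0)`. -/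
noncomputable def base (hf1 : f1.Monic) (hf2 : f2.Monic)
    (hfact : F.map I.ringCon.mk' = f1 * f2) : PDat I F f1 f2 where
  C := I.ringCon.Quotient
  ring := inferInstance
  K := ⊥
  φ := I.ringCon.mk'
  φbar := (⊥ : TwoSidedIdeal I.ringCon.Quotient).ringCon.mk'
  G1 := f1
  G2 := f2
  hom := fun a => by rw [TwoSidedIdeal.mem_bot, pairs_mk_zero]
  perf := fun x hx => by
    have := hx 0
    exact (TwoSidedIdeal.mem_bot _).1 this
  jac := fun a ha => by rw [(TwoSidedIdeal.mem_bot _).1 ha]; simp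
  comm := rfl
  monic1 := hf1
  monic2 := hf2
  fact := hfact
  red1 := rfl
  red2 := rfl

theorem ev_red (hf1 : f1.Monic) (hf2 : f2.Monic)
    (hfact : F.map I.ringCon.mk' = f1 * f2) (D : PDat I F f1 f2) (t : PTm A) :
    D.K.ringCon.mk' (D.ev t) = D.φbar ((base hf1 hf2 hfact).ev t) := by
  induction t with
  | atom a => exact (D.φbar_mk a).symm
  | v1 n => 
    have := congrArg (fun p => p.coeff n) D.red1
    simp only [coeff_map] at this
    exact this
  | v2 n =>
    have := congrArg (fun p => p.coeff n) D.red2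
    simp only [coeff_map] at this
    exact this
  | add s t hs ht => 
    simp only [ev, map_add, hs, ht]
    exact (map_add D.φbar _ _).symm
  | mul s t hs ht => 
    simp only [ev, map_mul, hs, ht]
    exact (map_mul D.φbar _ _).symm
  | neg t ht => 
    simp only [ev, map_neg, ht]
    exact (map_neg D.φbar _).symm
  | inv t ht =>
    have hiff : D.ev t ∈ D.K ↔ (base hf1 hf2 hfact).ev t ∈ (base hf1 hf2 hfact).K := by
      rw [← pairs_mk_zero, ht]
      exact (D.φbar_zero _).trans (TwoSidedIdeal.mem_bot _).symm
    simp only [ev]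
    by_cases h : D.ev t ∈ D.K
    · rw [if_pos h, if_pos (hiff.1 h)]
      have h0 : (base hf1 hf2 hfact).ev t = 0 := (TwoSidedIdeal.mem_bot _).1 (hiff.1 h)
      have e := congrArg D.K.ringCon.mk' (Ring.mul_inverse_cancel _ (D.jac _ h))
      rw [map_mul, map_add, (pairs_mk_zero _ _).2 h, map_one, add_zero, one_mul] at e
      rw [h0, e, add_zero, Ring.inverse_one]
      exact (map_one D.φbar).symm
    · rw [if_neg h, if_neg (fun h' => h (hiff.2 h')), map_zero]
      exact (map_zero D.φbar).symm

variable (I F f1 f2) in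
def setoid : Setoid (PTm A) where
  r s t := ∀ D : PDat I F f1 f2, D.ev s = D.ev t
  iseqv := ⟨fun _ _ => rfl, fun h D => (h D).symm, fun h h' D => (h D).trans (h' D)⟩

variable (I F f1 f2) in
def Univ : Type u := Quotient (setoid I F f1 f2)

variable (I F f1 f2) in
def cls (t : PTm A) : Univ I F f1 f2 := Quotient.mk _ t

theorem cls_eq {s t : PTm A} :
    cls I F f1 f2 s = cls I F f1 f2 t ↔ ∀ D : PDat I F f1 f2, D.ev s = D.ev t :=
  ⟨fun h => Quotient.exact h, fun h => Quotient.sound h⟩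

theorem cls_surj (x : Univ I F f1 f2) : ∃ t, cls I F f1 f2 t = x := Quotient.exists_rep x

noncomputable instance : Add (Univ I F f1 f2) where
  add := Quotient.map₂ PTm.add fun a b h c d h' D => by simp only [ev, h D, h' D]

noncomputable instance : Mul (Univ I F f1 f2) where
  mul := Quotient.map₂ PTm.mul fun a b h c d h' D => by simp only [ev, h D, h' D]

noncomputable instance : Neg (Univ I F f1 f2) where
  neg := Quotient.map PTm.neg fun a b h D => by simp only [ev, h D]

noncomputable instance : Zero (Univ I F f1 f2) where
  zero := cls I F f1 f2 (.atom 0)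

noncomputable instance : One (Univ I F f1 f2) where
  one := cls I F f1 f2 (.atom 1)

noncomputable instance : Ring (Univ I F f1 f2) where
  nsmul := nsmulRec
  zsmul := zsmulRec
  add_assoc a b c := by
    induction a, b, c using Quotient.inductionOn₃
    exact Quotient.sound fun D => by simp only [ev, add_assoc]
  zero_add a := by
    induction a using Quotient.inductionOn
    exact Quotient.sound fun D => by simp only [ev, map_zero, zero_add]
  add_zero a := by
    induction a using Quotient.inductionOn
    exact Quotient.sound fun D => by simp only [ev, map_zero, add_zero]
  add_comm a b := by
    induction a, b using Quotient.inductionOn₂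
    exact Quotient.sound fun D => by simp only [ev, add_comm]
  left_distrib a b c := by
    induction a, b, c using Quotient.inductionOn₃
    exact Quotient.sound fun D => by simp only [ev, mul_add]
  right_distrib a b c := by
    induction a, b, c using Quotient.inductionOn₃
    exact Quotient.sound fun D => by simp only [ev, add_mul]
  zero_mul a := by
    induction a using Quotient.inductionOn
    exact Quotient.sound fun D => by simp only [ev, map_zero, zero_mul]
  mul_zero a := by
    induction a using Quotient.inductionOn
    exact Quotient.sound fun D => by simp only [ev, map_zero, mul_zero]
  mul_assoc a b c := by
    induction a, b, c using Quotient.inductionOn₃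
    exact Quotient.sound fun D => by simp only [ev, mul_assoc]
  one_mul a := by
    induction a using Quotient.inductionOn
    exact Quotient.sound fun D => by simp only [ev, map_one, one_mul]
  mul_one a := by
    induction a using Quotient.inductionOn
    exact Quotient.sound fun D => by simp only [ev, map_one, mul_one]
  neg_add_cancel a := by
    induction a using Quotient.inductionOn
    exact Quotient.sound fun D => by simp only [ev, map_zero, neg_add_cancel]

theorem cls_add (s t : PTm A) : cls I F f1 f2 (.add s t) = cls I F f1 f2 s + cls I F f1 f2 t := rfl
theorem cls_mul (s t : PTm A) : cls I F f1 f2 (.mul s t) = cls I F f1 f2 s * cls I F f1 f2 t := rfl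
theorem cls_neg (t : PTm A) : cls I F f1 f2 (.neg t) = - cls I F f1 f2 t := rfl

/-- Evaluation of the universal ring in a datum. -/
noncomputable def evH (D : PDat I F f1 f2) : Univ I F f1 f2 →+* D.C where
  toFun := Quotient.lift D.ev fun _ _ h => h D
  map_zero' := D.φ.map_zero
  map_one' := D.φ.map_one
  map_add' a b := by
    induction a, b using Quotient.inductionOn₂
    rfl
  map_mul' a b := by
    induction a, b using Quotient.inductionOn₂
    rfl

theorem evH_cls (D : PDat I F f1 f2) (t : PTm A) : D.evH (cls I F f1 f2 t) = D.ev t := rfl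

theorem univ_ext {x y : Univ I F f1 f2} (h : ∀ D : PDat I F f1 f2, D.evH x = D.evH y) :
    x = y := by
  obtain ⟨s, rfl⟩ := cls_surj x
  obtain ⟨t, rfl⟩ := cls_surj y
  exact cls_eq.2 h

variable (I F f1 f2) in
noncomputable def Phi : A →+* Univ I F f1 f2 where
  toFun a := cls I F f1 f2 (.atom a)
  map_zero' := rfl
  map_one' := rfl
  map_add' a b := cls_eq.2 fun D => D.φ.map_add a b
  map_mul' a b := cls_eq.2 fun D => D.φ.map_mul a b

variable (I F f1 f2) in
noncomputable def P1 : (Univ I F f1 f2)[X] :=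
  ∑ i ∈ Finset.range (f1.natDegree + 1), monomial i (cls I F f1 f2 (.v1 i))

variable (I F f1 f2) in
noncomputable def P2 : (Univ I F f1 f2)[X] :=
  ∑ i ∈ Finset.range (f2.natDegree + 1), monomial i (cls I F f1 f2 (.v2 i))

theorem P1_coeff (n : ℕ) : (P1 I F f1 f2).coeff n = cls I F f1 f2 (.v1 n) := by
  simp only [P1, finsetSum_coeff, coeff_monomial, Finset.sum_ite_eq', Finset.mem_range]
  split_ifs with h
  · rfl
  · exact (univ_ext fun D => by
      rw [evH_cls, map_zero]
      exact D.coeff_zero _ D.monic1 _ D.red1 n (by omega)).symm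

theorem P2_coeff (n : ℕ) : (P2 I F f1 f2).coeff n = cls I F f1 f2 (.v2 n) := by
  simp only [P2, finsetSum_coeff, coeff_monomial, Finset.sum_ite_eq', Finset.mem_range]
  split_ifs with h
  · rfl
  · exact (univ_ext fun D => by
      rw [evH_cls, map_zero]
      exact D.coeff_zero _ D.monic2 _ D.red2 n (by omega)).symm

theorem P1_map (D : PDat I F f1 f2) : (P1 I F f1 f2).map D.evH = D.G1 := by
  ext n
  rw [coeff_map, P1_coeff]; rfl

theorem P2_map (D : PDat I F f1 f2) : (P2 I F f1 f2).map D.evH = D.G2 := by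
  ext n
  rw [coeff_map, P2_coeff]; rfl

theorem P1_monic (hf1 : f1.Monic) : (P1 I F f1 f2).Monic := by
  refine monic_of_natDegree_le_of_coeff_eq_one f1.natDegree ?_ ?_
  · rw [natDegree_le_iff_coeff_eq_zero]
    intro n hn
    rw [P1_coeff]
    exact univ_ext fun D => by
      rw [evH_cls, map_zero]
      exact D.coeff_zero _ D.monic1 _ D.red1 n hn
  · rw [P1_coeff]
    exact univ_ext fun D => by
      rw [evH_cls, map_one]
      exact D.coeff_one _ D.monic1 _ hf1 D.red1

theorem P2_monic (hf2 : f2.Monic) : (P2 I F f1 f2).Monic := by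
  refine monic_of_natDegree_le_of_coeff_eq_one f2.natDegree ?_ ?_
  · rw [natDegree_le_iff_coeff_eq_zero]
    intro n hn
    rw [P2_coeff]
    exact univ_ext fun D => by
      rw [evH_cls, map_zero]
      exact D.coeff_zero _ D.monic2 _ D.red2 n hn
  · rw [P2_coeff]
    exact univ_ext fun D => by
      rw [evH_cls, map_one]
      exact D.coeff_one _ D.monic2 _ hf2 D.red2

theorem evH_comp (D : PDat I F f1 f2) : D.evH.comp (Phi I F f1 f2) = D.φ := rfl

theorem P_fact : F.map (Phi I F f1 f2) = P1 I F f1 f2 * P2 I F f1 f2 := by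
  ext n
  refine univ_ext fun D => ?_
  rw [← coeff_map, ← coeff_map, Polynomial.map_mul, P1_map, P2_map, ← D.fact, map_map, evH_comp]

end PDat

/-- Proposition `factorizationN`: for a perfect pair `(A,I)`, a monic
`F ∈ A[x]` and a factorization `F̄ = f₁f₂` into left coprime monic polynomials over
`A/I`, there is a perfect Jacobson pair `(B,J)`, a morphism of pairs `Φ : (A,I) → (B,J)`
and a lifted factorization `Φ(F) = F₁F₂` which is universal among such data. -/
theorem exists_universal_factorization_pair {A : Type u} [Ring A]
    (I : TwoSidedIdeal A) (hperf : IsPerfectPair I)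
    (F : A[X]) (hF : F.Monic)
    (f1 f2 : (I.ringCon.Quotient)[X]) (hf1 : f1.Monic) (hf2 : f2.Monic)
    (hcop : LeftCoprime f1 f2)
    (hfact : F.map I.ringCon.mk' = f1 * f2) :
    ∃ (B : Type u) (_ : Ring B) (J : TwoSidedIdeal B) (Φ : A →+* B)
      (Φbar : I.ringCon.Quotient →+* J.ringCon.Quotient) (F1 F2 : B[X]),
      IsPairHom I J Φ ∧ IsPerfectPair J ∧ IsJacobsonPair J ∧
      Φbar.comp I.ringCon.mk' = J.ringCon.mk'.comp Φ ∧
      F1.Monic ∧ F2.Monic ∧ F.map Φ = F1 * F2 ∧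
      F1.map J.ringCon.mk' = f1.map Φbar ∧ F2.map J.ringCon.mk' = f2.map Φbar ∧
      ∀ (C : Type u) (_ : Ring C) (K : TwoSidedIdeal C) (φ : A →+* C)
        (φbar : I.ringCon.Quotient →+* K.ringCon.Quotient) (G1 G2 : C[X]),
        IsPairHom I K φ → IsPerfectPair K → IsJacobsonPair K →
        φbar.comp I.ringCon.mk' = K.ringCon.mk'.comp φ →
        G1.Monic → G2.Monic → F.map φ = G1 * G2 →
        G1.map K.ringCon.mk' = f1.map φbar → G2.map K.ringCon.mk' = f2.map φbar →
        ∃! ψ : B →+* C, IsPairHom J K ψ ∧ φ = ψ.comp Φ := by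
  classical
  let D0 : PDat I F f1 f2 := PDat.base hf1 hf2 hfact
  let red : PDat.Univ I F f1 f2 →+* I.ringCon.Quotient := D0.evH
  let J : TwoSidedIdeal (PDat.Univ I F f1 f2) := TwoSidedIdeal.ker red
  let Φ := PDat.Phi I F f1 f2
  have memJ : ∀ x, x ∈ J ↔ red x = 0 := fun x => TwoSidedIdeal.mem_ker red
  have redΦ : ∀ a, red (Φ a) = I.ringCon.mk' a := fun a => rfl
  have hΦ : IsPairHom I J Φ := fun a => by rw [memJ, redΦ, pairs_mk_zero]
  have evJ : ∀ D : PDat I F f1 f2, IsPairHom J D.K D.evH := by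
    intro D x
    obtain ⟨t, rfl⟩ := PDat.cls_surj x
    rw [memJ, ← pairs_mk_zero, PDat.evH_cls, PDat.ev_red hf1 hf2 hfact]
    exact D.φbar_zero _
  let Φbar : I.ringCon.Quotient →+* J.ringCon.Quotient :=
    I.ringCon.lift (J.ringCon.mk'.comp Φ) (by
      intro x y h
      show J.ringCon.mk' (Φ x) = J.ringCon.mk' (Φ y)
      rw [pairs_mk_eq, ← map_sub, hΦ, ← TwoSidedIdeal.rel_iff]
      exact h)
  have hΦbar : ∀ a, Φbar (I.ringCon.mk' a) = J.ringCon.mk' (Φ a) := fun a => rfl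
  have hinv : ∀ t, PDat.cls I F f1 f2 t ∈ J →
      (1 + PDat.cls I F f1 f2 t) * PDat.cls I F f1 f2 (.inv t) = 1 ∧
      PDat.cls I F f1 f2 (.inv t) * (1 + PDat.cls I F f1 f2 t) = 1 := by
    intro t ht
    have hD : ∀ D : PDat I F f1 f2, D.ev t ∈ D.K := fun D => (evJ D _).2 ht
    constructor <;> refine PDat.univ_ext fun D => ?_
    · rw [map_mul, map_add, map_one, PDat.evH_cls, PDat.evH_cls, PDat.ev, if_pos (hD D),
        Ring.mul_inverse_cancel _ (D.jac _ (hD D))]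
    · rw [map_mul, map_add, map_one, PDat.evH_cls, PDat.evH_cls, PDat.ev, if_pos (hD D),
        Ring.inverse_mul_cancel _ (D.jac _ (hD D))]
  have hinv0 : ∀ t, PDat.cls I F f1 f2 t ∉ J → PDat.cls I F f1 f2 (.inv t) = 0 := by
    intro t ht
    refine PDat.univ_ext fun D => ?_
    rw [map_zero, PDat.evH_cls, PDat.ev, if_neg (fun h : D.ev t ∈ D.K => ht ((evJ D _).1 h))]
  have r1 : ∀ n a, I.ringCon.mk' a = f1.coeff n → PDat.cls I F f1 f2 (.v1 n) - Φ a ∈ J := by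
    intro n a h
    rw [memJ, map_sub, redΦ, h]
    exact sub_self (f1.coeff n)
  have r2 : ∀ n a, I.ringCon.mk' a = f2.coeff n → PDat.cls I F f1 f2 (.v2 n) - Φ a ∈ J := by
    intro n a h
    rw [memJ, map_sub, redΦ, h]
    exact sub_self (f2.coeff n)
  refine ⟨PDat.Univ I F f1 f2, inferInstance, J, Φ, Φbar, PDat.P1 I F f1 f2, PDat.P2 I F f1 f2,
    hΦ, ?_, ?_, rfl, PDat.P1_monic hf1, PDat.P2_monic hf2, PDat.P_fact, ?_, ?_, ?_⟩
  · intro x hx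
    refine PDat.univ_ext fun D => ?_
    rw [map_zero]
    exact D.perf _ fun n => pairs_commFilt_map J D.K D.evH (fun y hy => (evJ D y).2 hy) n x (hx n)
  · intro x hx
    obtain ⟨t, rfl⟩ := PDat.cls_surj x
    exact ⟨⟨_, _, (hinv t hx).1, (hinv t hx).2⟩, rfl⟩
  · ext n
    obtain ⟨a, ha⟩ := I.ringCon.mk'_surjective (f1.coeff n)
    rw [coeff_map, coeff_map, PDat.P1_coeff, ← ha, hΦbar, pairs_mk_eq]
    exact r1 n a ha
  · ext n
    obtain ⟨a, ha⟩ := I.ringCon.mk'_surjective (f2.coeff n)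
    rw [coeff_map, coeff_map, PDat.P2_coeff, ← ha, hΦbar, pairs_mk_eq]
    exact r2 n a ha
  · intro C hC K φ φbar G1 G2 hφ hKp hKj hcomm hG1 hG2 hG hg1 hg2
    let D : PDat I F f1 f2 := ⟨C, hC, K, φ, φbar, G1, G2, hφ, hKp, hKj, hcomm, hG1, hG2, hG,
      hg1, hg2⟩
    let e : PDat.Univ I F f1 f2 →+* C := D.evH
    refine ⟨e, ⟨evJ D, rfl⟩, ?_⟩
    rintro ψ ⟨hψ, hψΦ⟩
    have hψa : ∀ a, ψ (Φ a) = φ a := fun a => by rw [hψΦ]; rfl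
    have hcomm' : ∀ a, φbar (I.ringCon.mk' a) = K.ringCon.mk' (φ a) :=
      fun a => RingHom.congr_fun hcomm a
    have huniq := pairs_unique K hKj hKp G1 G2 ((PDat.P1 I F f1 f2).map ψ)
      ((PDat.P2 I F f1 f2).map ψ) hG1 ((PDat.P1_monic hf1).map ψ)
      (by rw [← hG, ← Polynomial.map_mul, ← PDat.P_fact, map_map, hψΦ])
      (by
        obtain ⟨a, b, hab⟩ := hcop
        refine ⟨a.map φbar, b.map φbar, ?_⟩
        rw [hg1, hg2, ← Polynomial.map_mul, ← Polynomial.map_mul, ← Polynomial.map_add, hab,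
          Polynomial.map_one])
      (by
        rw [hg1]
        ext n
        obtain ⟨a, ha⟩ := I.ringCon.mk'_surjective (f1.coeff n)
        rw [coeff_map, coeff_map, coeff_map, PDat.P1_coeff, ← ha, hcomm', eq_comm, pairs_mk_eq,
          ← hψa, ← map_sub, hψ]
        exact r1 n a ha)
      (by
        rw [hg2]
        ext n
        obtain ⟨a, ha⟩ := I.ringCon.mk'_surjective (f2.coeff n)
        rw [coeff_map, coeff_map, coeff_map, PDat.P2_coeff, ← ha, hcomm', eq_comm, pairs_mk_eq,
          ← hψa, ← map_sub, hψ]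
        exact r2 n a ha)
    have main : ∀ t, ψ (PDat.cls I F f1 f2 t) = e (PDat.cls I F f1 f2 t) := by
      intro t
      induction t with
      | atom a => exact hψa a
      | v1 n => rw [← PDat.P1_coeff, ← coeff_map, ← huniq.1, PDat.P1_coeff]; rfl
      | v2 n => rw [← PDat.P2_coeff, ← coeff_map, ← huniq.2, PDat.P2_coeff]; rfl
      | add s t hs ht => rw [PDat.cls_add, map_add, map_add, hs, ht]
      | mul s t hs ht => rw [PDat.cls_mul, map_mul, map_mul, hs, ht]
      | neg t ht => rw [PDat.cls_neg, map_neg, map_neg, ht]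
      | inv t ht =>
        by_cases h : PDat.cls I F f1 f2 t ∈ J
        · have h1 := congrArg ψ (hinv t h).2
          have h2 := congrArg e (hinv t h).1
          rw [map_mul, map_add, map_one] at h1 h2
          rw [ht] at h1
          exact left_inv_eq_right_inv h1 h2
        · rw [hinv0 t h, map_zero, map_zero]
    ext x
    obtain ⟨t, rfl⟩ := PDat.cls_surj x
    exact main t
end

section
/- Every perfect pair (A,I) has a left Henselization: there exist a perfect pair (H,J) that is left Henselian and a morphism of pairs φ:(A,I)→(H,J) such that for every morphism of pairs ψ0:(A,I)→(B,K) with (B,K) a perfect left Henselian pair, there exists a unique morphism of pairs ψ:(H,J)→(B,K) with ψ0 = ψ∘φ. -/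
open Polynomial

universe u

section HenselAux

def GoodFac {B R : Type*} [Ring B] [Ring R] (π : B →+* R) (F : B[X]) (f1 f2 : R[X])
    (p : B[X] × B[X]) : Prop :=
  p.1.Monic ∧ p.2.Monic ∧ F = p.1 * p.2 ∧ p.1.map π = f1 ∧ p.2.map π = f2

def Hen {B R : Type*} [Ring B] [Ring R] (π : B →+* R) : Prop :=
  (∀ k, π k = 0 → IsUnit (1 + k)) ∧
  ∀ F : B[X], F.Monic → ∀ f1 f2 : R[X], f1.Monic → f2.Monic → LeftCoprime f1 f2 →
    F.map π = f1 * f2 → ∃! p : B[X] × B[X], GoodFac π F f1 f2 p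

theorem LeftCoprime.map' {R S : Type*} [Ring R] [Ring S] (f : R →+* S) {a b : R[X]}
    (h : LeftCoprime a b) : LeftCoprime (a.map f) (b.map f) := by
  obtain ⟨g1, g2, h⟩ := h
  refine ⟨g1.map f, g2.map f, ?_⟩
  rw [← Polynomial.map_mul, ← Polynomial.map_mul, ← Polynomial.map_add, h, Polynomial.map_one]

theorem mk_eq_zero_iff_s12 {B : Type*} [Ring B] (K : TwoSidedIdeal B) (x : B) :
    K.ringCon.mk' x = 0 ↔ x ∈ K := by
  rw [← TwoSidedIdeal.mem_ker, TwoSidedIdeal.ker_ringCon_mk']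

theorem hen_of_pair {B : Type*} [Ring B] (K : TwoSidedIdeal B) (h : IsLeftHenselianPair K) :
    Hen K.ringCon.mk' :=
  ⟨fun k hk => h.1 k ((mk_eq_zero_iff_s12 K k).1 hk), h.2⟩

theorem pair_of_hen {B R : Type*} [Ring B] [Ring R] (π : B →+* R) (h : Hen π) :
    IsLeftHenselianPair (TwoSidedIdeal.ker π) := by
  refine ⟨fun k hk => h.1 k ((TwoSidedIdeal.mem_ker π).1 hk), ?_⟩
  generalize hJ : TwoSidedIdeal.ker π = J
  intro F hF f1 f2 h1 h2 hc hm
  have hle : J.ringCon ≤ RingCon.ker π := fun {x y} hxy => by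
    subst hJ; exact (TwoSidedIdeal.ker_ringCon π).1 hxy
  let θ : J.ringCon.Quotient →+* R := J.ringCon.lift π hle
  have hθ : θ.comp J.ringCon.mk' = π := rfl
  have hinj : Function.Injective θ := by
    rw [injective_iff_map_eq_zero]
    intro x hx
    obtain ⟨y, rfl⟩ := J.ringCon.mk'_surjective x
    rw [mk_eq_zero_iff_s12]
    rw [← hJ]
    exact (TwoSidedIdeal.mem_ker π).2 hx
  have key : ∀ (p : B[X]) (f : (J.ringCon.Quotient)[X]),
      p.map J.ringCon.mk' = f ↔ p.map π = f.map θ := by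
    intro p f
    rw [← hθ, ← Polynomial.map_map]
    exact (Polynomial.map_injective θ hinj).eq_iff.symm
  have := h.2 F hF (f1.map θ) (f2.map θ) (h1.map θ) (h2.map θ) (hc.map' θ)
    (by rw [← Polynomial.map_mul]; exact (key _ _).1 hm)
  simp only [key]
  exact this

theorem hen_natDegree {B R : Type*} [Ring B] [Ring R] {π : B →+* R} (h : Hen π)
    {S : Type*} [Ring S] (ρ : S →+* R)
    {p : B[X]} (hp : p.Monic) {f : S[X]} (hf : f.Monic) (e : p.map π = f.map ρ) :
    p.natDegree ≤ f.natDegree ∧ p.coeff f.natDegree = 1 := by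
  rcases subsingleton_or_nontrivial R with hR | hR
  · have : IsUnit (1 + (-1 : B)) := h.1 _ (Subsingleton.elim _ _)
    rw [add_neg_cancel, isUnit_zero_iff] at this
    have hB : Subsingleton B := subsingleton_of_zero_eq_one this
    refine ⟨?_, Subsingleton.elim _ _⟩
    rw [Subsingleton.elim p 0]; simp
  · have h1 : p.natDegree = f.natDegree := by
      rw [← hp.natDegree_map π, e, hf.natDegree_map ρ]
    refine ⟨h1.le, ?_⟩
    rw [← h1]; exact hp

theorem hen_prod {ι : Type*} {R P : Type*} [Ring R] [Ring P] {B Q : ι → Type*}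
    [∀ i, Ring (B i)] [∀ i, Ring (Q i)] (π : ∀ i, B i →+* Q i) (hπ : ∀ i, Hen (π i))
    (ρ : ∀ i, R →+* Q i) (p0 : P →+* R) (pr : ∀ i, P →+* B i)
    (hc : ∀ i, (π i).comp (pr i) = (ρ i).comp p0)
    (hinj : ∀ x y : P, p0 x = p0 y → (∀ i, pr i x = pr i y) → x = y)
    (hex : ∀ r (b : ∀ i, B i), (∀ i, π i (b i) = ρ i r) → ∃ x, p0 x = r ∧ ∀ i, pr i x = b i) :
    Hen p0 := by
  have hpoly : ∀ x y : P[X], x.map p0 = y.map p0 → (∀ i, x.map (pr i) = y.map (pr i)) →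
      x = y := by
    intro x y h1 h2
    ext n
    apply hinj
    · simpa using congrArg (fun q => q.coeff n) h1
    · intro i
      simpa using congrArg (fun q => q.coeff n) (h2 i)
  have hlift : ∀ (f : R[X]), f.Monic → ∀ g : ∀ i, (B i)[X], (∀ i, (g i).Monic) →
      (∀ i, (g i).map (π i) = f.map (ρ i)) →
      ∃ q : P[X], q.Monic ∧ q.map p0 = f ∧ ∀ i, q.map (pr i) = g i := by
    intro f hf g hg he
    have h1 : ∀ n, ∃ x, p0 x = f.coeff n ∧ ∀ i, pr i x = (g i).coeff n := by
      intro n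
      apply hex
      intro i
      simpa using congrArg (fun q => q.coeff n) (he i)
    choose c hc0 hc1 using h1
    have hdeg := fun i => hen_natDegree (hπ i) (ρ i) (hg i) hf (he i)
    set d := f.natDegree with hd
    let q : P[X] := ∑ j ∈ Finset.range (d + 1), monomial j (c j)
    have hco : ∀ n, q.coeff n = if n < d + 1 then c n else 0 := by
      intro n
      simp [q, Polynomial.coeff_monomial]
    refine ⟨q, ?_, ?_, ?_⟩
    · apply monic_of_natDegree_le_of_coeff_eq_one d
      · rw [Polynomial.natDegree_le_iff_coeff_eq_zero]
        intro n hn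
        rw [hco, if_neg (by omega)]
      · rw [hco, if_pos (by omega)]
        apply hinj
        · rw [hc0, map_one]; exact hf
        · intro i
          rw [hc1, map_one]; exact (hdeg i).2
    · ext n
      rw [Polynomial.coeff_map, hco]
      split_ifs with h
      · exact hc0 n
      · rw [map_zero, Polynomial.coeff_eq_zero_of_natDegree_lt (by omega)]
    · intro i
      ext n
      rw [Polynomial.coeff_map, hco]
      split_ifs with h
      · exact hc1 n i
      · rw [map_zero, Polynomial.coeff_eq_zero_of_natDegree_lt (by have := (hdeg i).1; omega)]
  have hcx : ∀ i x, π i (pr i x) = ρ i (p0 x) := fun i x => RingHom.congr_fun (hc i) x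
  have hcm : ∀ i (x : P[X]), (x.map (pr i)).map (π i) = (x.map p0).map (ρ i) := by
    intro i x
    rw [Polynomial.map_map, Polynomial.map_map, hc]
  constructor
  · intro k hk
    have h1 : ∀ i, IsUnit (1 + pr i k) := fun i => (hπ i).1 _ (by rw [hcx, hk, map_zero])
    choose u hu using h1
    obtain ⟨x, hx0, hx1⟩ := hex 1 (fun i => ((u i)⁻¹ : (B i)ˣ).1) (by
      intro i
      have h2 : (1 + pr i k) * ((u i)⁻¹ : (B i)ˣ).1 = 1 := by rw [← hu]; simp
      have h3 := congrArg (π i) h2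
      rw [map_mul, map_add, hcx, hk] at h3
      simpa using h3)
    refine ⟨⟨1 + k, x, ?_, ?_⟩, rfl⟩
    · apply hinj
      · simp [hk, hx0]
      · intro i; rw [map_mul, map_add, map_one, hx1, ← hu]; simp
    · apply hinj
      · simp [hk, hx0]
      · intro i; rw [map_mul, map_add, map_one, hx1, ← hu]; simp
  · intro F hF f1 f2 h1 h2 hco hm
    have hex1 := fun i => (hπ i).2 (F.map (pr i)) (hF.map _) (f1.map (ρ i)) (f2.map (ρ i))
      (h1.map _) (h2.map _) (hco.map' _) (by rw [hcm, hm, Polynomial.map_mul])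
    have hex2 := fun i => (hex1 i).exists
    choose g hg using hex2
    obtain ⟨q1, hq1, hq1', hq1''⟩ := hlift f1 h1 (fun i => (g i).1) (fun i => (hg i).1)
      (fun i => (hg i).2.2.2.1)
    obtain ⟨q2, hq2, hq2', hq2''⟩ := hlift f2 h2 (fun i => (g i).2) (fun i => (hg i).2.1)
      (fun i => (hg i).2.2.2.2)
    refine ⟨(q1, q2), ⟨hq1, hq2, ?_, hq1', hq2'⟩, ?_⟩
    · apply hpoly
      · rw [hm, Polynomial.map_mul, hq1', hq2']
      · intro i
        rw [Polynomial.map_mul, hq1'', hq2'']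
        exact (hg i).2.2.1
    · rintro ⟨r1, r2⟩ ⟨hr1, hr2, hr3, hr4, hr5⟩
      dsimp only at hr1 hr2 hr3 hr4 hr5
      have hh : ∀ i, (r1.map (pr i), r2.map (pr i)) = g i := by
        intro i
        apply (hex1 i).unique _ (hg i)
        refine ⟨hr1.map _, hr2.map _, ?_, ?_, ?_⟩
        · rw [hr3, Polynomial.map_mul]
        · rw [hcm, hr4]
        · rw [hcm, hr5]
      refine Prod.ext ?_ ?_
      · apply hpoly
        · dsimp only; rw [hr4, hq1']
        · intro i; rw [hq1'', ← hh i]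
      · apply hpoly
        · dsimp only; rw [hr5, hq2']
        · intro i; rw [hq2'', ← hh i]

theorem hen_sub {H P R : Type*} [Ring H] [Ring P] [Ring R] (π : P →+* R) (hπ : Hen π)
    (j : H →+* P) (hj : Function.Injective j)
    (hinv : ∀ h, Ring.inverse (j h) ∈ Set.range j)
    (hfac : ∀ (F : H[X]) (f1 f2 : R[X]) (p : P[X] × P[X]), f1.Monic → f2.Monic →
      LeftCoprime f1 f2 → GoodFac π (F.map j) f1 f2 p →
      ∀ n, p.1.coeff n ∈ Set.range j ∧ p.2.coeff n ∈ Set.range j) :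
    Hen (π.comp j) := by
  constructor
  · intro k hk
    have hu : IsUnit (j (1 + k)) := by
      rw [map_add, map_one]; exact hπ.1 _ hk
    obtain ⟨x, hx⟩ := hinv (1 + k)
    refine ⟨⟨1 + k, x, ?_, ?_⟩, rfl⟩
    · apply hj; rw [map_mul, hx, Ring.mul_inverse_cancel _ hu, map_one]
    · apply hj; rw [map_mul, hx, Ring.inverse_mul_cancel _ hu, map_one]
  · intro F hF f1 f2 h1 h2 hc hm
    have hU := hπ.2 (F.map j) (hF.map _) f1 f2 h1 h2 hc (by rw [Polynomial.map_map, hm])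
    obtain ⟨p, hp, -⟩ := id hU
    have hr := hfac F f1 f2 p h1 h2 hc hp
    obtain ⟨q1, hq1⟩ := (Polynomial.mem_lifts _).1
      ((Polynomial.lifts_iff_coeff_lifts (f := j) p.1).2 fun n => (hr n).1)
    obtain ⟨q2, hq2⟩ := (Polynomial.mem_lifts _).1
      ((Polynomial.lifts_iff_coeff_lifts (f := j) p.2).2 fun n => (hr n).2)
    obtain ⟨hp1, hp2, hp3, hp4, hp5⟩ := id hp
    refine ⟨(q1, q2), ⟨?_, ?_, ?_, ?_, ?_⟩, ?_⟩
    · rw [hj.monic_map_iff, hq1]; exact hp1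
    · rw [hj.monic_map_iff, hq2]; exact hp2
    · apply Polynomial.map_injective j hj
      rw [Polynomial.map_mul, hq1, hq2, hp3]
    · rw [← Polynomial.map_map, hq1, hp4]
    · rw [← Polynomial.map_map, hq2, hp5]
    · rintro ⟨r1, r2⟩ ⟨hr1, hr2, hr3, hr4, hr5⟩
      dsimp only at hr1 hr2 hr3 hr4 hr5
      have : (r1.map j, r2.map j) = p := by
        apply hU.unique _ hp
        refine ⟨hr1.map _, hr2.map _, ?_, ?_, ?_⟩
        · rw [hr3, Polynomial.map_mul]
        · rw [Polynomial.map_map, hr4]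
        · rw [Polynomial.map_map, hr5]
      subst this
      rw [Polynomial.map_injective j hj hq1, Polynomial.map_injective j hj hq2]

inductive HTerm (A R : Type u) [Ring R] : Type u
  | of (a : A) : HTerm A R
  | add (s t : HTerm A R) : HTerm A R
  | mul (s t : HTerm A R) : HTerm A R
  | neg (s : HTerm A R) : HTerm A R
  | inv (s : HTerm A R) : HTerm A R
  | fac (n : ℕ) (c : ℕ → HTerm A R) (f1 f2 : R[X]) (i : ℕ) (b : Bool) : HTerm A R

open Classical in
noncomputable def facCoeff {P R : Type*} [Ring P] [Ring R] (π : P →+* R) (F : P[X])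
    (f1 f2 : R[X]) (i : ℕ) (b : Bool) : P :=
  if h : f1.Monic ∧ f2.Monic ∧ LeftCoprime f1 f2 ∧ ∃ p, GoodFac π F f1 f2 p then
    (if b then h.2.2.2.choose.1 else h.2.2.2.choose.2).coeff i
  else 0

theorem hen_unique {P R : Type*} [Ring P] [Ring R] {π : P →+* R} (hπ : Hen π) {F : P[X]}
    {f1 f2 : R[X]} (h1 : f1.Monic) (h2 : f2.Monic) (hc : LeftCoprime f1 f2)
    {p q : P[X] × P[X]} (hp : GoodFac π F f1 f2 p) (hq : GoodFac π F f1 f2 q) : p = q := by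
  obtain ⟨hp1, hp2, hp3, hp4, hp5⟩ := id hp
  refine (hπ.2 F ?_ f1 f2 h1 h2 hc ?_).unique hp hq
  · rw [hp3]; exact hp1.mul hp2
  · rw [hp3, Polynomial.map_mul, hp4, hp5]

theorem facCoeff_eq {P R : Type*} [Ring P] [Ring R] {π : P →+* R} (hπ : Hen π) {F : P[X]}
    {f1 f2 : R[X]} (h1 : f1.Monic) (h2 : f2.Monic) (hc : LeftCoprime f1 f2)
    {p : P[X] × P[X]} (hp : GoodFac π F f1 f2 p) (i : ℕ) (b : Bool) :
    facCoeff π F f1 f2 i b = (if b then p.1 else p.2).coeff i := by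
  have h : f1.Monic ∧ f2.Monic ∧ LeftCoprime f1 f2 ∧ ∃ p, GoodFac π F f1 f2 p :=
    ⟨h1, h2, hc, p, hp⟩
  rw [facCoeff, dif_pos h, hen_unique hπ h1 h2 hc h.2.2.2.choose_spec hp]

noncomputable def HTerm.eval {A R : Type u} [Ring A] [Ring R] {P : Type*} [Ring P]
    (π : P →+* R) (α : A →+* P) : HTerm A R → P
  | .of a => α a
  | .add s t => s.eval π α + t.eval π α
  | .mul s t => s.eval π α * t.eval π α
  | .neg s => - s.eval π α
  | .inv s => Ring.inverse (s.eval π α)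
  | .fac n c f1 f2 i b =>
      facCoeff π (∑ k ∈ Finset.range n, monomial k ((c k).eval π α)) f1 f2 i b

def evalRange {A R : Type u} [Ring A] [Ring R] {P : Type*} [Ring P]
    (π : P →+* R) (α : A →+* P) : Subring P where
  carrier := Set.range (HTerm.eval π α)
  mul_mem' := by rintro _ _ ⟨s, rfl⟩ ⟨t, rfl⟩; exact ⟨.mul s t, rfl⟩
  add_mem' := by rintro _ _ ⟨s, rfl⟩ ⟨t, rfl⟩; exact ⟨.add s t, rfl⟩
  neg_mem' := by rintro _ ⟨s, rfl⟩; exact ⟨.neg s, rfl⟩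
  zero_mem' := ⟨.of 0, map_zero α⟩
  one_mem' := ⟨.of 1, map_one α⟩

theorem poly_sum {P : Type*} [Ring P] (F : P[X]) :
    (∑ k ∈ Finset.range (F.natDegree + 1), monomial k (F.coeff k)) = F :=
  (Polynomial.as_sum_range F).symm

theorem evalRange_fac {A R : Type u} [Ring A] [Ring R] {P : Type*} [Ring P]
    (π : P →+* R) (hπ : Hen π) (α : A →+* P) (F : P[X]) (hF : ∀ n, F.coeff n ∈ evalRange π α)
    (f1 f2 : R[X]) (p : P[X] × P[X]) (h1 : f1.Monic) (h2 : f2.Monic)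
    (hc : LeftCoprime f1 f2) (hp : GoodFac π F f1 f2 p) (n : ℕ) :
    p.1.coeff n ∈ evalRange π α ∧ p.2.coeff n ∈ evalRange π α := by
  choose c hcc using hF
  have hs : (∑ k ∈ Finset.range (F.natDegree + 1), monomial k ((c k).eval π α)) = F := by
    simp only [hcc]; exact poly_sum F
  constructor
  · refine ⟨.fac (F.natDegree + 1) c f1 f2 n true, ?_⟩
    rw [HTerm.eval, hs, facCoeff_eq hπ h1 h2 hc hp]; simp
  · refine ⟨.fac (F.natDegree + 1) c f1 f2 n false, ?_⟩
    rw [HTerm.eval, hs, facCoeff_eq hπ h1 h2 hc hp]; simp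

theorem commFilt_map {A B : Type*} [Ring A] [Ring B] (I : TwoSidedIdeal A) (J : TwoSidedIdeal B)
    (f : A →+* B) (h : ∀ x ∈ I, f x ∈ J) (n : ℕ) : ∀ x ∈ commFilt I n, f x ∈ commFilt J n := by
  induction n with
  | zero => exact h
  | succ n ih =>
    have : commFilt I (n + 1) ≤ TwoSidedIdeal.comap f (commFilt J (n + 1)) := by
      rw [commFilt, TwoSidedIdeal.span_le]
      rintro _ ⟨a, b, hb, rfl⟩
      rw [SetLike.mem_coe, TwoSidedIdeal.mem_comap]
      exact TwoSidedIdeal.subset_span ⟨f a, f b, ih b hb, by simp⟩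
    intro x hx
    exact (TwoSidedIdeal.mem_comap f).1 (this hx)

structure HObj {A : Type u} [Ring A] (I : TwoSidedIdeal A) : Type (u + 1) where
  B : Type u
  [ring : Ring B]
  K : TwoSidedIdeal B
  ψ : A →+* B
  hom : IsPairHom I K ψ
  perf : IsPerfectPair K
  hens : IsLeftHenselianPair K

attribute [instance] HObj.ring

def inducedHom {A B : Type*} [Ring A] [Ring B] {I : TwoSidedIdeal A} {K : TwoSidedIdeal B}
    {ψ : A →+* B} (h : IsPairHom I K ψ) : I.ringCon.Quotient →+* K.ringCon.Quotient :=
  I.ringCon.lift (K.ringCon.mk'.comp ψ) (fun {x y} hxy => by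
    have h1 : x - y ∈ I := (TwoSidedIdeal.rel_iff I x y).1 hxy
    have h2 := (mk_eq_zero_iff_s12 K _).2 ((h _).2 h1)
    rw [map_sub, map_sub, sub_eq_zero] at h2
    exact h2)

theorem inducedHom_mk {A B : Type*} [Ring A] [Ring B] {I : TwoSidedIdeal A}
    {K : TwoSidedIdeal B} {ψ : A →+* B} (h : IsPairHom I K ψ) (a : A) :
    inducedHom h (I.ringCon.mk' a) = K.ringCon.mk' (ψ a) := rfl

theorem inducedHom_eq_zero {A B : Type*} [Ring A] [Ring B] {I : TwoSidedIdeal A}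
    {K : TwoSidedIdeal B} {ψ : A →+* B} (h : IsPairHom I K ψ) (x : I.ringCon.Quotient) :
    inducedHom h x = 0 ↔ x = 0 := by
  obtain ⟨a, rfl⟩ := I.ringCon.mk'_surjective x
  rw [inducedHom_mk, mk_eq_zero_iff_s12, mk_eq_zero_iff_s12, h]

def bigProd {A : Type u} [Ring A] (I : TwoSidedIdeal A) :
    Subring (I.ringCon.Quotient × (∀ i : HObj I, i.B)) where
  carrier := {x | ∀ i : HObj I, i.K.ringCon.mk' (x.2 i) = inducedHom i.hom x.1}
  mul_mem' := by
    intro x y hx hy i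
    rw [Prod.snd_mul, Prod.fst_mul, Pi.mul_apply, map_mul, map_mul, hx i, hy i]
  add_mem' := by
    intro x y hx hy i
    rw [Prod.snd_add, Prod.fst_add, Pi.add_apply, map_add, map_add, hx i, hy i]
  neg_mem' := by
    intro x hx i
    rw [Prod.snd_neg, Prod.fst_neg, Pi.neg_apply, map_neg, map_neg, hx i]
  zero_mem' := by
    intro i
    rw [Prod.snd_zero, Prod.fst_zero, Pi.zero_apply, map_zero, map_zero]
  one_mem' := by
    intro i
    rw [Prod.snd_one, Prod.fst_one, Pi.one_apply, map_one, map_one]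

def bigP0 {A : Type u} [Ring A] (I : TwoSidedIdeal A) : bigProd I →+* I.ringCon.Quotient :=
  (RingHom.fst _ _).comp (bigProd I).subtype

def bigPr {A : Type u} [Ring A] (I : TwoSidedIdeal A) (i : HObj I) : bigProd I →+* i.B :=
  (Pi.evalRingHom _ i).comp ((RingHom.snd _ _).comp (bigProd I).subtype)

theorem big_comm {A : Type u} [Ring A] (I : TwoSidedIdeal A) (i : HObj I) (x : bigProd I) :
    i.K.ringCon.mk' (bigPr I i x) = inducedHom i.hom (bigP0 I x) := x.2 i

theorem big_inj {A : Type u} [Ring A] (I : TwoSidedIdeal A) (x y : bigProd I)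
    (h0 : bigP0 I x = bigP0 I y) (h : ∀ i, bigPr I i x = bigPr I i y) : x = y :=
  Subtype.ext (Prod.ext h0 (funext h))

theorem big_hen {A : Type u} [Ring A] (I : TwoSidedIdeal A) : Hen (bigP0 I) := by
  refine hen_prod (fun i : HObj I => i.K.ringCon.mk') (fun i => hen_of_pair _ i.hens)
    (fun i => inducedHom i.hom) (bigP0 I) (bigPr I) ?_ (big_inj I) ?_
  · intro i
    exact RingHom.ext (big_comm I i)
  · intro r b h
    exact ⟨⟨(r, b), h⟩, rfl, fun i => rfl⟩

def bigA {A : Type u} [Ring A] (I : TwoSidedIdeal A) : A →+* bigProd I :=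
  (RingHom.prod I.ringCon.mk' (RingHom.pi fun i : HObj I => i.ψ)).codRestrict (bigProd I)
    (fun _ _ => rfl)

theorem agree {A : Type u} [Ring A] (I : TwoSidedIdeal A) {P : Type*} [Ring P]
    (π : P →+* I.ringCon.Quotient) (hπ : Hen π) (α : A →+* P) (hα : π.comp α = I.ringCon.mk')
    {H : Type*} [Ring H] (j : H →+* P) (hj : Function.Injective j)
    (hr : ∀ t, HTerm.eval π α t ∈ Set.range j) (φ : A →+* H) (hφ : j.comp φ = α)
    {B : Type*} [Ring B] (K : TwoSidedIdeal B) (hK : IsLeftHenselianPair K)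
    (ψ0 : A →+* B) (h0 : IsPairHom I K ψ0) (ψ ψ' : H →+* B)
    (hψ : IsPairHom (TwoSidedIdeal.ker (π.comp j)) K ψ) (e : ψ0 = ψ.comp φ)
    (hψ' : IsPairHom (TwoSidedIdeal.ker (π.comp j)) K ψ') (e' : ψ0 = ψ'.comp φ)
    (t : HTerm A I.ringCon.Quotient) : ∀ h, j h = HTerm.eval π α t → ψ h = ψ' h := by
  have hred : ∀ χ : H →+* B, IsPairHom (TwoSidedIdeal.ker (π.comp j)) K χ → ψ0 = χ.comp φ →
      K.ringCon.mk'.comp χ = (inducedHom h0).comp (π.comp j) := by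
    intro χ hχ eχ
    ext h
    obtain ⟨a, ha⟩ := I.ringCon.mk'_surjective (π (j h))
    have h1 : h - φ a ∈ TwoSidedIdeal.ker (π.comp j) := by
      rw [TwoSidedIdeal.mem_ker, map_sub, sub_eq_zero]
      have h2 : π (j (φ a)) = I.ringCon.mk' a := by
        rw [← hα, ← hφ]; rfl
      change π (j h) = π (j (φ a))
      rw [h2, ha]
    have h2 := (mk_eq_zero_iff_s12 K _).2 ((hχ _).2 h1)
    rw [map_sub, map_sub, sub_eq_zero] at h2
    change K.ringCon.mk' (χ h) = inducedHom h0 (π (j h))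
    rw [h2, ← ha, inducedHom_mk, eχ]; rfl
  induction t with
  | of a =>
    intro h hh
    have : h = φ a := hj (by rw [hh, HTerm.eval, ← hφ]; rfl)
    rw [this]
    exact (RingHom.congr_fun e a).symm.trans (RingHom.congr_fun e' a)
  | add s t ihs iht =>
    intro h hh
    obtain ⟨x, hx⟩ := hr s
    obtain ⟨y, hy⟩ := hr t
    have : h = x + y := hj (by rw [hh, HTerm.eval, map_add, hx, hy])
    rw [this, map_add, map_add, ihs x hx, iht y hy]
  | mul s t ihs iht =>
    intro h hh
    obtain ⟨x, hx⟩ := hr s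
    obtain ⟨y, hy⟩ := hr t
    have : h = x * y := hj (by rw [hh, HTerm.eval, map_mul, hx, hy])
    rw [this, map_mul, map_mul, ihs x hx, iht y hy]
  | neg s ihs =>
    intro h hh
    obtain ⟨x, hx⟩ := hr s
    have : h = -x := hj (by rw [hh, HTerm.eval, map_neg, hx])
    rw [this, map_neg, map_neg, ihs x hx]
  | inv s ihs =>
    intro h hh
    obtain ⟨x, hx⟩ := hr s
    rw [HTerm.eval, ← hx] at hh
    by_cases hu : IsUnit (j x)
    · have h1 : h * x = 1 := hj (by rw [map_mul, hh, Ring.inverse_mul_cancel _ hu, map_one])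
      have h2 : x * h = 1 := hj (by rw [map_mul, hh, Ring.mul_inverse_cancel _ hu, map_one])
      have h3 : ψ h * ψ x = 1 := by rw [← map_mul, h1, map_one]
      have h4 : ψ x * ψ' h = 1 := by rw [ihs x hx, ← map_mul, h2, map_one]
      exact left_inv_eq_right_inv h3 h4
    · rw [Ring.inverse_non_unit _ hu] at hh
      have : h = 0 := hj (by rw [hh, map_zero])
      rw [this, map_zero, map_zero]
  | fac n c f1 f2 i b ih =>
    intro h hh
    have hh0 := hh
    rw [HTerm.eval] at hh
    by_cases hex : f1.Monic ∧ f2.Monic ∧ LeftCoprime f1 f2 ∧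
        ∃ p, GoodFac π (∑ k ∈ Finset.range n, monomial k ((c k).eval π α)) f1 f2 p
    · obtain ⟨h1, h2, hc, p, hp⟩ := hex
      have hco : ∀ (m : ℕ) (b' : Bool), (if b' then p.1 else p.2).coeff m ∈ Set.range j := by
        intro m b'
        rw [← facCoeff_eq hπ h1 h2 hc hp m b']
        exact hr (.fac n c f1 f2 m b')
      obtain ⟨q1, hq1⟩ := (Polynomial.mem_lifts _).1
        ((Polynomial.lifts_iff_coeff_lifts (f := j) p.1).2 fun n => by simpa using hco n true)
      obtain ⟨q2, hq2⟩ := (Polynomial.mem_lifts _).1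
        ((Polynomial.lifts_iff_coeff_lifts (f := j) p.2).2 fun n => by simpa using hco n false)
      obtain ⟨hp1, hp2, hp3, hp4, hp5⟩ := id hp
      choose d hd using fun k => hr (c k)
      have hF : (∑ k ∈ Finset.range n, monomial k (d k)) = q1 * q2 := by
        apply Polynomial.map_injective j hj
        rw [Polynomial.map_mul, hq1, hq2, ← hp3, Polynomial.map_sum]
        simp only [Polynomial.map_monomial, hd]
      have hm1 : q1.Monic := by rw [hj.monic_map_iff, hq1]; exact hp1
      have hm2 : q2.Monic := by rw [hj.monic_map_iff, hq2]; exact hp2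
      have hgood : ∀ χ : H →+* B, IsPairHom (TwoSidedIdeal.ker (π.comp j)) K χ →
          ψ0 = χ.comp φ → GoodFac K.ringCon.mk' ((∑ k ∈ Finset.range n, monomial k (d k)).map χ)
            (f1.map (inducedHom h0)) (f2.map (inducedHom h0)) (q1.map χ, q2.map χ) := by
        intro χ hχ eχ
        refine ⟨hm1.map _, hm2.map _, ?_, ?_, ?_⟩
        · rw [hF, Polynomial.map_mul]
        · dsimp only
          rw [Polynomial.map_map, hred χ hχ eχ, ← Polynomial.map_map, ← Polynomial.map_map, hq1,
            hp4]
        · dsimp only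
          rw [Polynomial.map_map, hred χ hχ eχ, ← Polynomial.map_map, ← Polynomial.map_map, hq2,
            hp5]
      have hg := hgood ψ hψ e
      have hg' := hgood ψ' hψ' e'
      have hFF : (∑ k ∈ Finset.range n, monomial k (d k)).map ψ =
          (∑ k ∈ Finset.range n, monomial k (d k)).map ψ' := by
        rw [Polynomial.map_sum, Polynomial.map_sum]
        simp only [Polynomial.map_monomial]
        exact Finset.sum_congr rfl fun k _ => by rw [ih k (d k) (hd k)]
      rw [hFF] at hg
      have hun := hen_unique (hen_of_pair K hK) (h1.map _) (h2.map _) (hc.map' _) hg hg'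
      have hun1 : q1.map ψ = q1.map ψ' := congrArg Prod.fst hun
      have hun2 : q2.map ψ = q2.map ψ' := congrArg Prod.snd hun
      rw [facCoeff_eq hπ h1 h2 hc hp] at hh
      cases b with
      | true =>
        have : h = q1.coeff i := hj (by rw [hh, ← Polynomial.coeff_map, hq1]; simp)
        rw [this, ← Polynomial.coeff_map, hun1, Polynomial.coeff_map]
      | false =>
        have : h = q2.coeff i := hj (by rw [hh, ← Polynomial.coeff_map, hq2]; simp)
        rw [this, ← Polynomial.coeff_map, hun2, Polynomial.coeff_map]
    · rw [facCoeff, dif_neg hex] at hh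
      have : h = 0 := hj (by rw [hh, map_zero])
      rw [this, map_zero, map_zero]

theorem main_aux {A : Type u} [Ring A] (I : TwoSidedIdeal A) {H : Type u} [Ring H]
    (j : H →+* bigProd I) (hj : Function.Injective j)
    (hr : ∀ x, x ∈ Set.range j ↔ x ∈ evalRange (bigP0 I) (bigA I)) (φ : A →+* H)
    (hφ : j.comp φ = bigA I) :
    IsLeftHenselization I (TwoSidedIdeal.ker ((bigP0 I).comp j)) φ := by
  have hφa : ∀ a, j (φ a) = bigA I a := RingHom.congr_fun hφ
  have hpair : ∀ i, IsPairHom (TwoSidedIdeal.ker ((bigP0 I).comp j)) i.K ((bigPr I i).comp j) := by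
    intro i h
    rw [TwoSidedIdeal.mem_ker, ← mk_eq_zero_iff_s12]
    exact (iff_of_eq (congrArg (· = 0) (big_comm I i (j h)))).trans (inducedHom_eq_zero i.hom _)
  refine ⟨?_, ?_, ?_, ?_⟩
  · intro a
    rw [TwoSidedIdeal.mem_ker, ← mk_eq_zero_iff_s12, RingHom.comp_apply, hφa]
    rfl
  · intro x hx
    apply hj
    rw [map_zero]
    apply big_inj
    · rw [map_zero]
      exact (TwoSidedIdeal.mem_ker ((bigP0 I).comp j)).1 (hx 0)
    · intro i
      rw [map_zero]
      exact i.perf _ fun n => commFilt_map _ i.K ((bigPr I i).comp j)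
        (fun y hy => (hpair i y).2 hy) n x (hx n)
  · apply pair_of_hen
    apply hen_sub _ (big_hen I) j hj
    · intro h
      rw [hr]
      obtain ⟨t, ht⟩ := (hr (j h)).1 ⟨h, rfl⟩
      exact ⟨.inv t, by rw [HTerm.eval, ht]⟩
    · intro F f1 f2 p h1 h2 hc hp n
      rw [hr, hr]
      refine evalRange_fac _ (big_hen I) _ (F.map j) ?_ f1 f2 p h1 h2 hc hp n
      intro m
      rw [← hr, Polynomial.coeff_map]
      exact ⟨_, rfl⟩
  · intro B _ K ψ0 h0 hp hh
    let i : HObj I := ⟨B, K, ψ0, h0, hp, hh⟩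
    refine ⟨(bigPr I i).comp j, ⟨hpair i, ?_⟩, ?_⟩
    · ext a
      rw [RingHom.comp_apply, RingHom.comp_apply, hφa]
      rfl
    · rintro ψ ⟨hψ, e⟩
      ext h
      obtain ⟨t, ht⟩ := (hr (j h)).1 ⟨h, rfl⟩
      refine agree I (bigP0 I) (big_hen I) (bigA I) rfl j hj (fun t => (hr _).2 ⟨t, rfl⟩) φ hφ
        K hh ψ0 h0 ψ _ hψ e (hpair i) ?_ t h ht.symm
      ext a
      rw [RingHom.comp_apply, RingHom.comp_apply, hφa]
      rfl

end HenselAux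

/-- Theorem `NHenselCom`: every perfect pair has a left Henselization. -/
theorem exists_leftHenselization {A : Type u} [Ring A] (I : TwoSidedIdeal A)
    (hperf : IsPerfectPair I) :
    ∃ (H : Type u) (_ : Ring H) (J : TwoSidedIdeal H) (φ : A →+* H),
      IsLeftHenselization I J φ := by
  have hs : Small.{u} (evalRange (bigP0 I) (bigA I)) :=
    small_range (HTerm.eval (bigP0 I) (bigA I))
  let S := evalRange (bigP0 I) (bigA I)
  let ε : Shrink.{u} S ≃+* S := Shrink.ringEquiv S
  refine ⟨Shrink.{u} S, inferInstance, _,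
    (ε.symm : S →+* Shrink.{u} S).comp ((bigA I).codRestrict S fun a => ⟨.of a, rfl⟩),
    main_aux I (S.subtype.comp (ε : Shrink.{u} S →+* S)) ?_ ?_ _ ?_⟩
  · exact Subtype.val_injective.comp ε.injective
  · intro x
    constructor
    · rintro ⟨y, rfl⟩
      exact (ε y).2
    · intro hx
      exact ⟨ε.symm ⟨x, hx⟩, by simp⟩
  · ext a : 1
    simp
    rfl
end

section
/- Let (A,I) be a perfect local pair, and let (H,J) together with φ:(A,I)→(H,J) be a left Henselization of (A,I). Then (H,J) is a local pair: H is a local ring and J is its maximal ideal, i.e. J equals the set of nonunits of H. -/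
open Polynomial

universe u

theorem sub_perfect {H : Type u} [Ring H] (J : TwoSidedIdeal H) (S : Subring H)
    (h : IsPerfectPair J) : IsPerfectPair (J.comap S.subtype) := by
  have key : ∀ n, ∀ x : S, x ∈ commFilt (J.comap S.subtype) n → (x : H) ∈ commFilt J n := by
    intro n
    induction n with
    | zero => intro x hx; exact (TwoSidedIdeal.mem_comap S.subtype).1 hx
    | succ n ih =>
      have : commFilt (J.comap S.subtype) (n+1) ≤ (commFilt J (n+1)).comap S.subtype := by
        rw [commFilt, TwoSidedIdeal.span_le]
        rintro x ⟨a, b, hb, rfl⟩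
        refine (TwoSidedIdeal.mem_comap S.subtype).2 ?_
        exact TwoSidedIdeal.subset_span ⟨a, b, ih b hb, by simp⟩
      intro x hx
      exact (TwoSidedIdeal.mem_comap S.subtype).1 (this hx)
  intro x hx
  exact Subtype.ext (h x fun n => key n x (hx n))

theorem mk_eq_iff {H : Type u} [Ring H] (J : TwoSidedIdeal H) (a b : H) :
    J.ringCon.mk' a = J.ringCon.mk' b ↔ a - b ∈ J := by
  rw [← TwoSidedIdeal.rel_iff]
  exact RingCon.eq _

theorem sub_hensel {H : Type u} [Ring H] (J : TwoSidedIdeal H) (S : Subring H)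
    (hS : ∀ j ∈ J, j ∈ S)
    (h : IsLeftHenselianPair J) : IsLeftHenselianPair (J.comap S.subtype) := by
  obtain ⟨hJ, hF⟩ := h
  set K := J.comap S.subtype with hK
  have memK : ∀ x : S, x ∈ K ↔ (x : H) ∈ J := fun x => TwoSidedIdeal.mem_comap S.subtype
  constructor
  · intro a ha
    obtain ⟨u, hu⟩ := hJ a ((memK a).1 ha)
    have h1 : (1 + (a : H)) * (↑u⁻¹ : H) = 1 := by rw [← hu]; simp
    have h2 : (↑u⁻¹ : H) * (1 + (a : H)) = 1 := by rw [← hu]; simp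
    have hm : (↑u⁻¹ : H) ∈ S := by
      have e : (↑u⁻¹ : H) = 1 - a * (↑u⁻¹ : H) := by
        rw [eq_sub_iff_add_eq]; rw [add_mul, one_mul] at h1; exact h1
      rw [e]
      exact S.sub_mem S.one_mem (hS _ (J.mul_mem_right _ _ ((memK a).1 ha)))
    exact ⟨⟨1 + a, ⟨_, hm⟩, Subtype.ext h1, Subtype.ext h2⟩, rfl⟩
  · intro F mF f1 f2 m1 m2 hc hfac
    let q : K.ringCon.Quotient →+* J.ringCon.Quotient :=
      RingCon.lift K.ringCon (J.ringCon.mk'.comp S.subtype) (by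
        intro x y hxy
        have := (TwoSidedIdeal.rel_iff K x y).1 hxy
        exact (mk_eq_iff J _ _).2 (by simpa using (memK _).1 this))
    have qmk : ∀ x : S, q (K.ringCon.mk' x) = J.ringCon.mk' (x : H) := fun x => rfl
    have qcomp : q.comp K.ringCon.mk' = J.ringCon.mk'.comp S.subtype := RingHom.ext qmk
    have surj : ∀ z : K.ringCon.Quotient, ∃ x, K.ringCon.mk' x = z :=
      fun z => Quotient.inductionOn' z fun x => ⟨x, rfl⟩
    have qinj : Function.Injective q := by
      intro z w hzw
      obtain ⟨x, rfl⟩ := surj z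
      obtain ⟨y, rfl⟩ := surj w
      rw [qmk, qmk, mk_eq_iff] at hzw
      exact (mk_eq_iff K _ _).2 ((memK _).2 (by simpa using hzw))
    have sinj : Function.Injective S.subtype := Subtype.val_injective
    have hsq : ∀ G : S[X], (G.map K.ringCon.mk').map q = (G.map S.subtype).map J.ringCon.mk' := by
      intro G; rw [Polynomial.map_map, Polynomial.map_map, qcomp]
    have lift : ∀ (G : H[X]) (g : K.ringCon.Quotient[X]), G.Monic →
        G.map J.ringCon.mk' = g.map q →
        ∃ G' : S[X], G'.Monic ∧ G'.map S.subtype = G ∧ G'.map K.ringCon.mk' = g := by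
      intro G g mG hG
      have : G ∈ Polynomial.lifts S.subtype := by
        rw [Polynomial.lifts_iff_coeff_lifts]
        intro n
        have hn := congrArg (fun p => p.coeff n) hG
        simp only [Polynomial.coeff_map] at hn
        obtain ⟨x, hx⟩ := surj (g.coeff n)
        rw [← hx, qmk, mk_eq_iff] at hn
        have : G.coeff n ∈ S := by
          have := S.add_mem (hS _ hn) x.2
          simpa using this
        exact ⟨⟨_, this⟩, rfl⟩
      obtain ⟨G', hG'⟩ := (Polynomial.mem_lifts _).1 this
      refine ⟨G', ?_, hG', ?_⟩
      · exact Polynomial.monic_of_injective sinj (hG' ▸ mG)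
      · apply Polynomial.map_injective q qinj
        rw [hsq, hG', hG]
    have hc' : LeftCoprime (f1.map q) (f2.map q) := by
      obtain ⟨g1, g2, hg⟩ := hc
      refine ⟨g1.map q, g2.map q, ?_⟩
      rw [← Polynomial.map_mul, ← Polynomial.map_mul, ← Polynomial.map_add, hg,
        Polynomial.map_one]
    obtain ⟨⟨P1, P2⟩, ⟨n1, n2, hP, hP1, hP2⟩, huniq⟩ :=
      hF (F.map S.subtype) (mF.map _) (f1.map q) (f2.map q) (m1.map _) (m2.map _) hc'
        (by rw [← hsq, hfac, Polynomial.map_mul])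
    dsimp only at n1 n2 hP hP1 hP2
    obtain ⟨G1, a1, b1, c1⟩ := lift P1 f1 n1 hP1
    obtain ⟨G2, a2, b2, c2⟩ := lift P2 f2 n2 hP2
    have minj := Polynomial.map_injective S.subtype sinj
    refine ⟨(G1, G2), ⟨a1, a2, ?_, c1, c2⟩, ?_⟩
    · apply minj
      rw [hP, Polynomial.map_mul, b1, b2]
    · rintro ⟨Q1, Q2⟩ ⟨d1, d2, hQ, e1, e2⟩
      dsimp only at d1 d2 hQ e1 e2
      have := huniq (Q1.map S.subtype, Q2.map S.subtype)
        ⟨d1.map _, d2.map _, by rw [hQ, Polynomial.map_mul], by rw [← hsq, e1],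
          by rw [← hsq, e2]⟩
      rw [Prod.mk.injEq] at this
      exact Prod.ext (minj (this.1.trans b1.symm)) (minj (this.2.trans b2.symm))

/-- Proposition `NHensellocal`: the left Henselization of a perfect local
pair is a local pair. -/
theorem leftHenselization_local {A H : Type u} [Ring A] [Ring H]
    (I : TwoSidedIdeal A) (J : TwoSidedIdeal H) (φ : A →+* H)
    (hperf : IsPerfectPair I)
    (hlocal : ∀ a : A, a ∈ I ↔ ¬ IsUnit a)
    (hH : IsLeftHenselization I J φ) :
    IsLocalRing H ∧ ∀ a : H, a ∈ J ↔ ¬ IsUnit a := by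
  obtain ⟨hφ, hp, hh, huniv⟩ := hH
  let S : Subring H :=
    { carrier := {x | ∃ a : A, x - φ a ∈ J}
      zero_mem' := ⟨0, by simpa using J.zero_mem⟩
      one_mem' := ⟨1, by simpa using J.zero_mem⟩
      add_mem' := by
        rintro x y ⟨a, ha⟩ ⟨b, hb⟩
        refine ⟨a + b, ?_⟩
        have : x + y - φ (a + b) = (x - φ a) + (y - φ b) := by rw [map_add]; abel
        rw [this]; exact J.add_mem ha hb
      neg_mem' := by
        rintro x ⟨a, ha⟩
        refine ⟨-a, ?_⟩
        have : -x - φ (-a) = -(x - φ a) := by rw [map_neg]; abel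
        rw [this]; exact J.neg_mem ha
      mul_mem' := by
        rintro x y ⟨a, ha⟩ ⟨b, hb⟩
        refine ⟨a * b, ?_⟩
        have : x * y - φ (a * b) = (x - φ a) * y + φ a * (y - φ b) := by
          rw [map_mul]; noncomm_ring
        rw [this]; exact J.add_mem (J.mul_mem_right _ _ ha) (J.mul_mem_left _ _ hb) }
  have hS : ∀ j ∈ J, j ∈ S := fun j hj => ⟨0, by simpa using hj⟩
  have hφS : ∀ a, φ a ∈ S := fun a => ⟨a, by simpa using J.zero_mem⟩
  let φ' : A →+* S := φ.codRestrict S hφS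
  obtain ⟨ψ, ⟨hψ, hψc⟩, -⟩ := huniv S inferInstance (J.comap S.subtype) φ'
    (fun a => (TwoSidedIdeal.mem_comap S.subtype).trans (hφ a)) (sub_perfect J S hp) (sub_hensel J S hS hh)
  have hid : S.subtype.comp ψ = RingHom.id H := by
    refine (huniv H inferInstance J φ hφ hp hh).unique ⟨?_, ?_⟩ ⟨fun a => Iff.rfl, rfl⟩
    · intro a
      exact (TwoSidedIdeal.mem_comap S.subtype).symm.trans (hψ a)
    · rw [RingHom.comp_assoc, ← hψc]; rfl
  have hall : ∀ x : H, ∃ a : A, x - φ a ∈ J := by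
    intro x
    have : ((ψ x : S) : H) = x := congrArg (fun f : H →+* H => f x) hid
    have h2 := (ψ x).2
    rw [this] at h2
    exact h2
  have h1 : (1 : H) ∉ J := by
    intro h
    rw [← map_one φ, hφ, hlocal] at h
    exact h isUnit_one
  have main : ∀ a : H, a ∈ J ↔ ¬ IsUnit a := by
    intro x
    constructor
    · rintro hx ⟨u, rfl⟩
      apply h1
      have := J.mul_mem_right _ (↑u⁻¹ : H) hx
      simpa using this
    · intro hx
      by_contra hn
      apply hx
      obtain ⟨a, ha⟩ := hall x
      have haI : a ∉ I := by
        intro h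
        apply hn
        have := J.add_mem ha ((hφ a).2 h)
        simpa using this
      have hau : IsUnit a := by
        by_contra h
        exact haI ((hlocal a).2 h)
      obtain ⟨u, hu⟩ := hau.map φ
      have : x = u * (1 + (↑u⁻¹ : H) * (x - φ a)) := by
        rw [mul_add, Units.mul_inv_cancel_left, hu]; simp
      rw [this]
      exact u.isUnit.mul (hh.1 _ (J.mul_mem_left _ _ ha))
  refine ⟨?_, main⟩
  haveI : Nontrivial H := ⟨⟨1, 0, fun h => h1 (h ▸ J.zero_mem)⟩⟩
  refine IsLocalRing.of_nonunits_add ?_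
  intro a b ha hb
  exact (main _).1 (J.add_mem ((main _).2 ha) ((main _).2 hb))
end

section
/- Let (A,I) be a commutative pair (A a commutative ring), and let (H,Jh) together with φ:(A,I)→(H,Jh) be a left Henselization of (A,I) (note that a commutative pair is perfect). Then the two-sided ideal J of H generated by all commutators [H,H] = {ab−ba : a,b ∈ H} is contained in Jh. -/
open Polynomial

universe u

theorem bot_perfect_aux {B : Type*} [Ring B] : IsPerfectPair (⊥ : TwoSidedIdeal B) := by
  intro x hx
  have h : x ∈ (⊥ : TwoSidedIdeal B) := hx 0
  simpa [TwoSidedIdeal.mem_bot] using h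

theorem bot_henselian_aux {B : Type*} [Ring B] :
    IsLeftHenselianPair (⊥ : TwoSidedIdeal B) := by
  have hinj : Function.Injective ((⊥ : TwoSidedIdeal B).ringCon.mk') := by
    intro a b hab
    have h1 : (⊥ : TwoSidedIdeal B).ringCon a b := (RingCon.eq _).1 hab
    rw [TwoSidedIdeal.rel_iff, TwoSidedIdeal.mem_bot] at h1
    exact sub_eq_zero.1 h1
  have hsurj : Function.Surjective ((⊥ : TwoSidedIdeal B).ringCon.mk') :=
    RingCon.mk'_surjective _
  have hpi := Polynomial.map_injective _ hinj
  refine ⟨?_, ?_⟩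
  · intro a ha
    rw [TwoSidedIdeal.mem_bot] at ha
    simp [ha]
  · intro F _ f1 f2 h1 h2 _ hF
    obtain ⟨p1, rfl⟩ := Polynomial.map_surjective _ hsurj f1
    obtain ⟨p2, rfl⟩ := Polynomial.map_surjective _ hsurj f2
    refine ⟨(p1, p2), ⟨?_, ?_, ?_, rfl, rfl⟩, ?_⟩
    · exact Polynomial.monic_of_injective hinj h1
    · exact Polynomial.monic_of_injective hinj h2
    · apply hpi
      rw [hF, Polynomial.map_mul]
    · rintro ⟨q1, q2⟩ ⟨_, _, _, e1, e2⟩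
      exact Prod.ext (hpi e1) (hpi e2)

/-- if `(A,I)` is a commutative pair and `(H,Jh)` its left Henselization,
then the two-sided ideal of `H` generated by all commutators is contained in `Jh`. -/
theorem commutator_ideal_le_of_commutative {A H : Type u} [CommRing A] [Ring H]
    (I : TwoSidedIdeal A) (Jh : TwoSidedIdeal H) (φ : A →+* H)
    (hH : IsLeftHenselization I Jh φ) :
    TwoSidedIdeal.span {x : H | ∃ a b : H, x = a * b - b * a} ≤ Jh := by
  obtain ⟨_, _, _, huniv⟩ := hH
  obtain ⟨ψ, ⟨hψ, _⟩, _⟩ := huniv I.ringCon.Quotient inferInstance ⊥ I.ringCon.mk'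
    (by
      intro a
      rw [TwoSidedIdeal.mem_bot, TwoSidedIdeal.mem_iff]
      exact RingCon.eq (c := I.ringCon) (a := a) (b := 0))
    bot_perfect_aux bot_henselian_aux
  rw [TwoSidedIdeal.span_le]
  rintro x ⟨a, b, rfl⟩
  refine (hψ _).1 ?_
  rw [TwoSidedIdeal.mem_bot, map_sub, map_mul, map_mul, sub_eq_zero]
  obtain ⟨s, hs⟩ := RingCon.mk'_surjective I.ringCon (ψ a)
  obtain ⟨t, ht⟩ := RingCon.mk'_surjective I.ringCon (ψ b)
  rw [← hs, ← ht, ← map_mul, ← map_mul, mul_comm]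
end

section
/- Let (A,I) be a commutative pair, let (H,Jh) together with φ:(A,I)→(H,Jh) be a left Henselization of (A,I), let J be the two-sided ideal of H generated by all commutators [H,H], and let q:H→H/J be the quotient map (so J ⊆ Jh). Then the commutative pair (H/J, Jh/J) together with the morphism q∘φ:(A,I)→(H/J, Jh/J) is a commutative Henselization of (A,I): (H/J, Jh/J) is a Henselian commutative pair, and for every morphism of pairs ψ0:(A,I)→(B,K) with B commutative and (B,K) Henselian, there exists a unique morphism of pairs ψ:(H/J, Jh/J)→(B,K) with ψ0 = ψ∘(q∘φ). -/
open Polynomial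

universe u

theorem chz_mk_eq {A : Type*} [Ring A] (I : TwoSidedIdeal A) (x y : A) :
    I.ringCon.mk' x = I.ringCon.mk' y ↔ x - y ∈ I := by
  rw [← TwoSidedIdeal.rel_iff]
  exact RingCon.eq _

theorem chz_mk_zero {A : Type*} [Ring A] (I : TwoSidedIdeal A) (x : A) :
    I.ringCon.mk' x = 0 ↔ x ∈ I := by
  rw [← map_zero I.ringCon.mk', chz_mk_eq, sub_zero]

/-- Lifting a homomorphism with the ideal in the kernel. -/
theorem chz_lift {A B : Type*} [Ring A] [Ring B] (I : TwoSidedIdeal A) (f : A →+* B)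
    (h : ∀ a ∈ I, f a = 0) : ∃ g : I.ringCon.Quotient →+* B, ∀ a, g (I.ringCon.mk' a) = f a := by
  refine ⟨I.ringCon.lift f ?_, fun a => rfl⟩
  intro x y hxy
  have := h _ ((I.rel_iff x y).1 hxy)
  rw [map_sub, sub_eq_zero] at this
  exact this

theorem chz_uniq {R S : Type*} [CommRing R] [CommRing S] (π : R →+* S)
    (hπ : Function.Surjective π)
    (hj : ∀ a, π a = 0 → IsUnit (1 + a)) {F1 F2 G1 G2 : R[X]} (hF1 : F1.Monic)
    (hG1 : G1.Monic) (h : F1 * F2 = G1 * G2)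
    (hF2 : F2.Monic) (hG2 : G2.Monic)
    (h1 : F1.map π = G1.map π) (h2 : F2.map π = G2.map π)
    (hc : IsCoprime (F1.map π) (F2.map π)) : F1 = G1 ∧ F2 = G2 := by
  rcases subsingleton_or_nontrivial S with hS | hS
  · have h0 := hj (-1) (Subsingleton.elim _ _)
    rw [add_neg_cancel, isUnit_zero_iff] at h0
    have : Subsingleton R := subsingleton_of_zero_eq_one h0
    exact ⟨Subsingleton.elim _ _, Subsingleton.elim _ _⟩
  · have hc' : IsCoprime F1 G2 := by
      rw [← isUnit_resultant_iff_isCoprime hF1]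
      rw [h2, ← isUnit_resultant_iff_isCoprime (hF1.map π), resultant_map_map,
        hF1.natDegree_map, hG2.natDegree_map] at hc
      obtain ⟨v, hv⟩ := hc.exists_right_inv
      obtain ⟨w, rfl⟩ := hπ v
      have := hj (F1.resultant G2 * w - 1) (by rw [map_sub, map_mul, hv, map_one, sub_self])
      rw [add_sub_cancel] at this
      exact isUnit_of_mul_isUnit_left this
    have hd : F1 ∣ G1 := hc'.dvd_of_dvd_mul_right (h ▸ dvd_mul_right _ _)
    have hdeg : G1.natDegree ≤ F1.natDegree := by
      rw [← hG1.natDegree_map π, ← hF1.natDegree_map π, h1]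
    have e := eq_of_monic_of_dvd_of_natDegree_le hF1 hG1 hd hdeg
    subst e
    exact ⟨rfl, hG1.isRegular.left h⟩

/-- For a commutative Jacobson pair, existence of liftings is enough. -/
theorem chz_of_exists {A : Type*} [CommRing A] (I : TwoSidedIdeal A) (hJ : IsJacobsonPair I)
    (h : ∀ F : A[X], F.Monic →
      ∀ f1 f2 : (I.ringCon.Quotient)[X], f1.Monic → f2.Monic → LeftCoprime f1 f2 →
      F.map (I.ringCon.mk') = f1 * f2 →
      ∃ p : A[X] × A[X], p.1.Monic ∧ p.2.Monic ∧ F = p.1 * p.2 ∧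
        p.1.map I.ringCon.mk' = f1 ∧ p.2.map I.ringCon.mk' = f2) :
    IsLeftHenselianPair I := by
  refine ⟨hJ, fun F hF f1 f2 hf1 hf2 hc hFf => ?_⟩
  obtain ⟨p, hp1, hp2, hFp, e1, e2⟩ := h F hF f1 f2 hf1 hf2 hc hFf
  refine ⟨p, ⟨hp1, hp2, hFp, e1, e2⟩, ?_⟩
  rintro r ⟨hr1, hr2, hFr, d1, d2⟩
  have := chz_uniq I.ringCon.mk' I.ringCon.mk'_surjective
    (fun a ha => hJ a ((chz_mk_zero I a).1 ha)) hr1 hp1 (hFr.symm.trans hFp) hr2 hp2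
    (d1.trans e1.symm) (d2.trans e2.symm) (by rw [d1, d2]; exact hc)
  exact Prod.ext this.1 this.2

theorem chz_perfect_comm {A : Type*} [CommRing A] (I : TwoSidedIdeal A) : IsPerfectPair I := by
  intro x hx
  have h1 := hx 1
  have : commFilt I 1 ≤ ⊥ := by
    refine TwoSidedIdeal.span_le.2 ?_
    rintro _ ⟨a, b, _, rfl⟩
    simp [mul_comm a b]
  exact (TwoSidedIdeal.mem_bot A).1 (this h1)

theorem chz_leftCoprime_map {A B : Type*} [Ring A] [Ring B] (j : A →+* B) {f1 f2 : A[X]}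
    (h : LeftCoprime f1 f2) : LeftCoprime (f1.map j) (f2.map j) := by
  obtain ⟨g1, g2, h⟩ := h
  refine ⟨g1.map j, g2.map j, ?_⟩
  rw [← Polynomial.map_mul, ← Polynomial.map_mul, ← Polynomial.map_add, h, Polynomial.map_one]

/-- A subring containing the ideal is again perfect left Henselian. -/
theorem chz_sub {H : Type*} [Ring H] (K : TwoSidedIdeal H) (S : Subring H)
    (hS : ∀ x ∈ K, x ∈ S) (hp : IsPerfectPair K) (hK : IsLeftHenselianPair K) :
    IsPerfectPair (K.comap S.subtype) ∧ IsLeftHenselianPair (K.comap S.subtype) := by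
  have hmem : ∀ x : S, x ∈ K.comap S.subtype ↔ (x : H) ∈ K := fun x =>
    TwoSidedIdeal.mem_comap _
  refine ⟨?_, ?_, ?_⟩
  · have key : ∀ n, commFilt (K.comap S.subtype) n ≤ (commFilt K n).comap S.subtype := by
      intro n
      induction n with
      | zero => exact le_rfl
      | succ n ih =>
        refine TwoSidedIdeal.span_le.2 ?_
        rintro _ ⟨a, b, hb, rfl⟩
        refine (TwoSidedIdeal.mem_comap _).2 ?_
        refine TwoSidedIdeal.subset_span ⟨a, b, (TwoSidedIdeal.mem_comap _).1 (ih hb), by simp⟩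
    intro x hx
    exact Subtype.ext (hp x fun n => (TwoSidedIdeal.mem_comap _).1 (key n (hx n)))
  · intro a ha
    rw [hmem] at ha
    obtain ⟨u, hu⟩ := hK.1 _ ha
    have hb : (↑u⁻¹ : H) ∈ S := by
      have : (↑u⁻¹ : H) = 1 - ↑u⁻¹ * a := by
        have h1 : (↑u⁻¹ : H) * (1 + a) = 1 := by rw [← hu]; simp
        rw [mul_add, mul_one] at h1
        exact eq_sub_of_add_eq h1
      rw [this]
      exact S.sub_mem S.one_mem (hS _ (K.mul_mem_left _ _ ha))
    refine ⟨⟨1 + a, ⟨_, hb⟩, ?_, ?_⟩, rfl⟩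
    · apply Subtype.ext
      change (1 + (a : H)) * _ = 1
      rw [← hu]; simp
    · apply Subtype.ext
      change _ * (1 + (a : H)) = 1
      rw [← hu]; simp
  · intro F hF f1 f2 hf1 hf2 hc hFf
    obtain ⟨j, hj⟩ := chz_lift (K.comap S.subtype) (K.ringCon.mk'.comp S.subtype)
      (fun a ha => (chz_mk_zero K _).2 ((hmem a).1 ha))
    have hjc : j.comp (K.comap S.subtype).ringCon.mk' = K.ringCon.mk'.comp S.subtype :=
      RingHom.ext hj
    have hji : Function.Injective j := by
      rw [injective_iff_map_eq_zero]
      intro x hx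
      obtain ⟨y, rfl⟩ := (K.comap S.subtype).ringCon.mk'_surjective x
      rw [hj] at hx
      exact (chz_mk_zero _ _).2 ((hmem y).2 ((chz_mk_zero K _).1 hx))
    have hsi : Function.Injective S.subtype := Subtype.val_injective
    have hmm : ∀ P : S[X], (P.map S.subtype).map K.ringCon.mk' =
        (P.map (K.comap S.subtype).ringCon.mk').map j := by
      intro P
      rw [Polynomial.map_map, Polynomial.map_map, hjc]
    obtain ⟨p, ⟨hp1, hp2, hFp, e1, e2⟩, hu⟩ := hK.2 (F.map S.subtype) (hF.map _)
      (f1.map j) (f2.map j) (hf1.map _) (hf2.map _) (chz_leftCoprime_map j hc)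
      (by rw [hmm, hFf, Polynomial.map_mul])
    have hl : ∀ (P : H[X]) (f : ((K.comap S.subtype).ringCon.Quotient)[X]),
        P.map K.ringCon.mk' = f.map j → ∃ P' : S[X], P'.map S.subtype = P := by
      intro P f hPf
      rw [← mem_lifts, lifts_iff_coeff_lifts]
      intro n
      have h1 := congrArg (fun q => q.coeff n) hPf
      simp only [coeff_map] at h1
      obtain ⟨s, hs⟩ := (K.comap S.subtype).ringCon.mk'_surjective (f.coeff n)
      rw [← hs, hj] at h1
      have h2 := hS _ ((chz_mk_eq K _ _).1 h1)
      have h3 := S.add_mem h2 s.2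
      exact ⟨⟨P.coeff n, by simpa using h3⟩, rfl⟩
    obtain ⟨P1, hP1⟩ := hl _ _ e1
    obtain ⟨P2, hP2⟩ := hl _ _ e2
    have inj1 := Polynomial.map_injective _ hsi
    have inj2 := Polynomial.map_injective _ hji
    refine ⟨(P1, P2), ⟨?_, ?_, ?_, ?_, ?_⟩, ?_⟩
    · rw [← hP1] at hp1; exact Polynomial.monic_of_injective hsi hp1
    · rw [← hP2] at hp2; exact Polynomial.monic_of_injective hsi hp2
    · apply inj1
      rw [Polynomial.map_mul, hP1, hP2, hFp]
    · apply inj2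
      rw [← hmm, hP1, e1]
    · apply inj2
      rw [← hmm, hP2, e2]
    · rintro r ⟨hr1, hr2, hFr, d1, d2⟩
      have := hu (r.1.map S.subtype, r.2.map S.subtype)
        ⟨hr1.map _, hr2.map _, by rw [hFr, Polynomial.map_mul], by rw [hmm, d1],
          by rw [hmm, d2]⟩
      apply Prod.ext
      · apply inj1
        rw [hP1, ← this]
      · apply inj1
        rw [hP2, ← this]

/-- `H = φ(A) + Jh`. -/
theorem chz_surj {A H : Type u} [CommRing A] [Ring H]
    (I : TwoSidedIdeal A) (K : TwoSidedIdeal H) (φ : A →+* H)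
    (hH : IsLeftHenselization I K φ) (x : H) : ∃ a, x - φ a ∈ K := by
  obtain ⟨hφ, hp, hK, hun⟩ := hH
  let S : Subring H := (K.ringCon.mk'.comp φ).range.comap K.ringCon.mk'
  have hS : ∀ x ∈ K, x ∈ S := fun x hx =>
    ⟨0, by rw [map_zero]; exact ((chz_mk_zero K x).2 hx).symm⟩
  obtain ⟨hp', hK'⟩ := chz_sub K S hS hp hK
  let φ' : A →+* S := φ.codRestrict S (fun a => ⟨a, rfl⟩)
  obtain ⟨ψ, ⟨hψ, hψφ⟩, -⟩ := hun S inferInstance (K.comap S.subtype) φ'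
    (fun a => (TwoSidedIdeal.mem_comap _).trans (hφ a)) hp' hK'
  have h1 : S.subtype.comp ψ = RingHom.id H := by
    refine (hun H inferInstance K φ hφ hp hK).unique ⟨?_, ?_⟩ ⟨fun a => Iff.rfl, rfl⟩
    · intro a
      exact (TwoSidedIdeal.mem_comap S.subtype).symm.trans (hψ a)
    · rw [RingHom.comp_assoc, ← hψφ]; rfl
  have h2 : ((ψ x : S) : H) = x := congrArg (fun f => f x) h1
  obtain ⟨a, ha⟩ : x ∈ S := h2 ▸ (ψ x).2
  exact ⟨a, (chz_mk_eq K _ _).1 ha.symm⟩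

theorem commutative_henselization {A H : Type u} [CommRing A] [Ring H]
    (I : TwoSidedIdeal A) (Jh : TwoSidedIdeal H) (φ : A →+* H)
    (hH : IsLeftHenselization I Jh φ)
    (J : TwoSidedIdeal H)
    (hJdef : J = TwoSidedIdeal.span {x : H | ∃ a b : H, x = a * b - b * a})
    (JhQ : TwoSidedIdeal J.ringCon.Quotient)
    (hJhQdef : JhQ = TwoSidedIdeal.span (J.ringCon.mk' '' (Jh : Set H))) :
    (∀ x y : J.ringCon.Quotient, x * y = y * x) ∧
    IsLeftHenselianPair JhQ ∧
    ∀ (B : Type u) (_ : CommRing B) (K : TwoSidedIdeal B) (ψ0 : A →+* B),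
      IsPairHom I K ψ0 → IsLeftHenselianPair K →
      ∃! ψ : J.ringCon.Quotient →+* B,
        IsPairHom JhQ K ψ ∧ ψ0 = ψ.comp (J.ringCon.mk'.comp φ) := by
  have hcomm : ∀ x y : J.ringCon.Quotient, x * y = y * x := by
    intro x y
    obtain ⟨a, rfl⟩ := J.ringCon.mk'_surjective x
    obtain ⟨b, rfl⟩ := J.ringCon.mk'_surjective y
    rw [← map_mul, ← map_mul, chz_mk_eq, hJdef]
    exact TwoSidedIdeal.subset_span ⟨a, b, rfl⟩
  have hJle : J ≤ Jh := by
    rw [hJdef]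
    refine TwoSidedIdeal.span_le.2 ?_
    rintro _ ⟨x, y, rfl⟩
    obtain ⟨a, ha⟩ := chz_surj I Jh φ hH x
    obtain ⟨b, hb⟩ := chz_surj I Jh φ hH y
    refine (chz_mk_eq Jh _ _).1 ?_
    rw [map_mul, map_mul, (chz_mk_eq Jh _ _).2 ha, (chz_mk_eq Jh _ _).2 hb, ← map_mul,
      ← map_mul, ← map_mul, ← map_mul, mul_comm]
  obtain ⟨π, hπ⟩ := chz_lift J Jh.ringCon.mk' (fun a ha => (chz_mk_zero Jh a).2 (hJle ha))
  have hmemQ : ∀ h : H, J.ringCon.mk' h ∈ JhQ ↔ h ∈ Jh := by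
    intro h
    constructor
    · have : JhQ ≤ TwoSidedIdeal.ker π := by
        rw [hJhQdef]
        refine TwoSidedIdeal.span_le.2 ?_
        rintro _ ⟨x, hx, rfl⟩
        refine (TwoSidedIdeal.mem_ker π).2 ?_
        rw [hπ]
        exact (chz_mk_zero Jh x).2 hx
      intro hh
      have h1 := (TwoSidedIdeal.mem_ker π).1 (this hh)
      rw [hπ] at h1
      exact (chz_mk_zero Jh h).1 h1
    · intro hh
      rw [hJhQdef]
      exact TwoSidedIdeal.subset_span ⟨h, hh, rfl⟩
  obtain ⟨hφ, hp, hK, hun⟩ := hH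
  refine ⟨hcomm, ?_, ?_⟩
  · letI : CommRing J.ringCon.Quotient := { (inferInstance : Ring J.ringCon.Quotient) with
      mul_comm := hcomm }
    refine chz_of_exists JhQ ?_ ?_
    · intro x hx
      obtain ⟨a, rfl⟩ := J.ringCon.mk'_surjective x
      have := (hK.1 a ((hmemQ a).1 hx)).map J.ringCon.mk'
      rwa [map_add, map_one] at this
    · intro F hF f1 f2 hf1 hf2 hc hFf
      obtain ⟨d, hd⟩ := chz_lift JhQ π (by
        intro x hx
        obtain ⟨a, rfl⟩ := J.ringCon.mk'_surjective x
        rw [hπ]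
        exact (chz_mk_zero Jh a).2 ((hmemQ a).1 hx))
      have hdi : Function.Injective d := by
        rw [injective_iff_map_eq_zero]
        intro x hx
        obtain ⟨y, rfl⟩ := JhQ.ringCon.mk'_surjective x
        obtain ⟨a, rfl⟩ := J.ringCon.mk'_surjective y
        rw [hd, hπ] at hx
        exact (chz_mk_zero JhQ _).2 ((hmemQ a).2 ((chz_mk_zero Jh _).1 hx))
      have hcomp : (d.comp JhQ.ringCon.mk').comp J.ringCon.mk' = Jh.ringCon.mk' :=
        RingHom.ext fun a => (hd _).trans (hπ a)
      obtain ⟨F', hF'F, -, hF'⟩ := lifts_and_natDegree_eq_and_monic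
        (mem_lifts_of_surjective J.ringCon.mk'_surjective F) hF
      have hmm : ∀ P : H[X], ((P.map J.ringCon.mk').map JhQ.ringCon.mk').map d =
          P.map Jh.ringCon.mk' := by
        intro P
        rw [Polynomial.map_map, Polynomial.map_map, ← hcomp]
      obtain ⟨p, ⟨hp1, hp2, hFp, e1, e2⟩, -⟩ := hK.2 F' hF' (f1.map d) (f2.map d)
        (hf1.map _) (hf2.map _) (chz_leftCoprime_map d hc)
        (by rw [← hmm, hF'F, hFf, Polynomial.map_mul])
      have inj := Polynomial.map_injective _ hdi
      refine ⟨(p.1.map J.ringCon.mk', p.2.map J.ringCon.mk'), hp1.map _, hp2.map _, ?_,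
        inj ?_, inj ?_⟩
      · rw [← hF'F, hFp, Polynomial.map_mul]
      · rw [hmm, e1]
      · rw [hmm, e2]
  · intro B _ K ψ0 hψ0 hKB
    obtain ⟨ψ, ⟨hψ, hψφ⟩, hu⟩ := hun B inferInstance K ψ0 hψ0 (chz_perfect_comm K) hKB
    have hker : J ≤ TwoSidedIdeal.ker ψ := by
      rw [hJdef]
      refine TwoSidedIdeal.span_le.2 ?_
      rintro _ ⟨a, b, rfl⟩
      refine (TwoSidedIdeal.mem_ker ψ).2 ?_
      rw [map_sub, map_mul, map_mul, mul_comm, sub_self]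
    obtain ⟨χ, hχ⟩ := chz_lift J ψ (fun a ha => (TwoSidedIdeal.mem_ker ψ).1 (hker ha))
    refine ⟨χ, ⟨?_, ?_⟩, ?_⟩
    · intro x
      obtain ⟨a, rfl⟩ := J.ringCon.mk'_surjective x
      rw [hχ, hmemQ]
      exact hψ a
    · rw [hψφ]
      exact RingHom.ext fun a => (hχ _).symm
    · rintro χ' ⟨h1, h2⟩
      have := hu (χ'.comp J.ringCon.mk') ⟨fun a => (h1 _).trans (hmemQ a), h2⟩
      refine RingHom.ext fun x => ?_
      obtain ⟨a, rfl⟩ := J.ringCon.mk'_surjective x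
      rw [hχ, ← this]
      rfl
end
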